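/- For each δ > 0 there exists ε_* > 0 such that every normalised self-similar profile φ_ε for K_ε with ε ∈ (0, ε_*) satisfies ∫₀^∞ |φ_ε(x) − e^{−x}| dx < δ. -/

import Mathlib

open MeasureTheory Real Set Filter

noncomputable def weight (a b x : ℝ) : ℝ := if x ≤ 1 then x ^ a else x ^ b

noncomputable def Xnorm (a b : ℝ) (g : ℝ → ℝ) : ℝ :=
  ∫ x in Ioi (0:ℝ), |g x| * weight a b x

def MemX (a b : ℝ) (g : ℝ → ℝ) : Prop :=
  IntegrableOn (fun x => g x * weight a b x) (Ioi 0)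

noncomputable def Kern (ε : ℝ) (W : ℝ → ℝ → ℝ) (x y : ℝ) : ℝ := 2 + ε * W x y

def GoodW (α : ℝ) (W : ℝ → ℝ → ℝ) : Prop :=
  ContinuousOn (fun p : ℝ × ℝ => W p.1 p.2) (Ioi 0 ×ˢ Ioi 0) ∧
  (∀ x y : ℝ, 0 < x → 0 < y → W x y = W y x) ∧
  (∀ l x y : ℝ, 0 < l → 0 < x → 0 < y → W (l * x) (l * y) = W x y) ∧
  (∀ x y : ℝ, 0 < x → 0 < y → 0 ≤ W x y ∧ W x y ≤ (x / y) ^ α + (y / x) ^ α)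

def IsProfile (K : ℝ → ℝ → ℝ) (φ : ℝ → ℝ) : Prop :=
  LocallyIntegrableOn φ (Ioi 0) ∧
  (∀ᵐ x ∂(volume.restrict (Ioi (0:ℝ))), 0 ≤ φ x) ∧
  IntegrableOn (fun x => x * φ x) (Ioi 0) ∧
  (∀ᵐ x ∂(volume.restrict (Ioi (0:ℝ))),
    x ^ 2 * φ x = ∫ y in Ioo 0 x, ∫ z in Ioi (x - y), y * K y z * φ y * φ z)

def IsNormalised (φ : ℝ → ℝ) : Prop := ∫ x in Ioi (0:ℝ), x * φ x = 1

/-! Write a profile through its mass measure `ρ = x φ(x) dx`, a probability measure, so that the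
equation says that `x² φ(x)` is the flux of mass across `x`. Tested with `-∂ₓ ((1 - e^{-px}) / x)`
and symmetrised, it becomes a relation for the desingularised Laplace transform
`Q(p) = ∫ (1 - e^{-px}) φ(x) dx`: as `K ≥ 2`, it gives `Q² ≤ Q - p Q'`, with equality for `K = 2`.
Hence `p / Q - p` is nondecreasing, `Q(p) ≤ p / (1 + p)`, and `∫ φ = Q(∞) ≤ 1`. This last bound
controls the singular part of the kernel near `0`, so that the inequality for `Q` reverses up to an
error `2 ε p^{2 - α}`. Therefore, as `ε → 0`, the functions `Q` and `Q'` tend to `p / (1 + p)` and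
`1 / (1 + p)²`, and the mass measures converge weakly to `x e^{-x} dx`. As `K ≥ 2` and the flux for
the kernel `2` is lower semicontinuous under weak convergence, `e^{-x} ≤ liminf φ_ε(x)` for almost
every `x`; since `∫ φ_ε ≤ 1 = ∫ e^{-x}`, Scheffé's argument turns this into convergence in `L¹`.
-/

/-! ### The mass flux and its test functions -/

/-- The pairs `(y, z)` with `y < x < y + z`: a cluster of size `y` that merges with one of size `z`
carries its mass across the size `x` exactly on this set. -/
def fluxRegion (x : ℝ) : Set (ℝ × ℝ) := {w | x ∈ Ioo w.1 (w.1 + w.2)}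

/-- The flux of mass across the size `x` under the coagulation kernel `K`, written in terms of the
mass measure `ρ = x φ(x) dx` of a size distribution `φ`, which turns the paper's
`y K(y, z) φ(y) φ(z) dy dz` into `(K(y, z) / z) ρ(dy) ρ(dz)`. -/
noncomputable def massFlux (K : ℝ → ℝ → ℝ) (ρ : Measure ℝ) (x : ℝ) : ENNReal :=
  ∫⁻ w in fluxRegion x, ENNReal.ofReal (K w.1 w.2 / w.2) ∂ρ.prod ρ

lemma isOpen_fluxRegion (x : ℝ) : IsOpen (fluxRegion x) :=
  (isOpen_lt continuous_fst continuous_const).inter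
    (isOpen_lt continuous_const (continuous_fst.add continuous_snd))

lemma measurableSet_fluxRegion (x : ℝ) : MeasurableSet (fluxRegion x) :=
  (isOpen_fluxRegion x).measurableSet

lemma measurableSet_sigma_fluxRegion : MeasurableSet {q : ℝ × ℝ × ℝ | q.2 ∈ fluxRegion q.1} :=
  (measurableSet_lt (f := fun q : ℝ × ℝ × ℝ => q.2.1) (by fun_prop) measurable_fst).inter
    (measurableSet_lt measurable_fst (g := fun q : ℝ × ℝ × ℝ => q.2.1 + q.2.2) (by fun_prop))

section Tonelli

variable {μ : Measure (ℝ × ℝ)} [SFinite μ] {k : ℝ × ℝ → ENNReal}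

lemma measurable_setLIntegral_fluxRegion (hk : AEMeasurable k μ) :
    Measurable fun x => ∫⁻ w in fluxRegion x, k w ∂μ := by
  have eq_mk : ∀ x, ∫⁻ w in fluxRegion x, k w ∂μ = ∫⁻ w, (fluxRegion x).indicator (hk.mk k) w ∂μ :=
    fun x => by
      rw [lintegral_indicator (measurableSet_fluxRegion x)]
      exact lintegral_congr_ae (ae_restrict_of_ae hk.ae_eq_mk)
  simp_rw [eq_mk]
  exact Measurable.lintegral_prod_right'
    (f := {q : ℝ × ℝ × ℝ | q.2 ∈ fluxRegion q.1}.indicator fun q => hk.mk k q.2)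
    ((hk.measurable_mk.comp measurable_snd).indicator measurableSet_sigma_fluxRegion)

lemma lintegral_mul_setLIntegral_fluxRegion (m : Measure ℝ) [SFinite m] {h : ℝ → ENNReal}
    (hh : Measurable h) (hk : AEMeasurable k μ) :
    ∫⁻ x, h x * ∫⁻ w in fluxRegion x, k w ∂μ ∂m =
      ∫⁻ w, k w * ∫⁻ x in Ioo w.1 (w.1 + w.2), h x ∂m ∂μ := by
  have hmeas : AEMeasurable ({q : ℝ × ℝ × ℝ | q.2 ∈ fluxRegion q.1}.indicator
      fun q => h q.1 * k q.2) (m.prod μ) :=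
    ((hh.comp measurable_fst).aemeasurable.mul hk.comp_snd).indicator
      measurableSet_sigma_fluxRegion
  calc ∫⁻ x, h x * ∫⁻ w in fluxRegion x, k w ∂μ ∂m
      = ∫⁻ x, ∫⁻ w, (fluxRegion x).indicator (fun w => h x * k w) w ∂μ ∂m := by
        refine lintegral_congr fun x => ?_
        rw [lintegral_indicator (measurableSet_fluxRegion x), lintegral_const_mul'' _ hk.restrict]
    _ = ∫⁻ w, ∫⁻ x, (Ioo w.1 (w.1 + w.2)).indicator (fun x => h x * k w) x ∂m ∂μ :=
        lintegral_lintegral_swap hmeas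
    _ = ∫⁻ w, k w * ∫⁻ x in Ioo w.1 (w.1 + w.2), h x ∂m ∂μ := by
        refine lintegral_congr fun w => ?_
        rw [lintegral_indicator measurableSet_Ioo, lintegral_mul_const _ hh, mul_comm]

end Tonelli

/-- The kernel `(1 - e^{-px}) / x` of the desingularised Laplace transform
`p ↦ ∫ (1 - e^{-px}) φ(x) dx` with respect to the mass measure `x φ(x) dx`. -/
noncomputable def desingKernel (p x : ℝ) : ℝ := (1 - exp (-(p * x))) / x

@[fun_prop]
lemma measurable_desingKernel (p : ℝ) : Measurable (desingKernel p) := by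
  unfold desingKernel; fun_prop

section Kernel

variable {p x y z : ℝ}

lemma desingKernel_nonneg (hp : 0 ≤ p) (hx : 0 < x) : 0 ≤ desingKernel p x :=
  div_nonneg (sub_nonneg.2 (exp_le_one_iff.2 (by nlinarith))) hx.le

lemma desingKernel_le (hx : 0 < x) : desingKernel p x ≤ p := by
  rw [desingKernel, div_le_iff₀ hx]
  linarith [add_one_le_exp (-(p * x))]

lemma desingKernel_le_inv (hx : 0 < x) : desingKernel p x ≤ x⁻¹ := by
  rw [desingKernel, div_eq_mul_inv]
  exact mul_le_of_le_one_left (inv_pos.2 hx).le (by linarith [exp_pos (-(p * x))])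

lemma mul_exp_le_desingKernel (hx : 0 < x) : p * exp (-(p * x)) ≤ desingKernel p x := by
  have h : (p * x + 1) * exp (-(p * x)) ≤ 1 := by
    calc (p * x + 1) * exp (-(p * x)) ≤ exp (p * x) * exp (-(p * x)) := by
          gcongr; exact add_one_le_exp _
      _ = 1 := by rw [← exp_add, add_neg_cancel, exp_zero]
  rw [desingKernel, le_div_iff₀ hx]
  linarith

lemma hasDerivAt_desingKernel_left (hx : x ≠ 0) (p : ℝ) :
    HasDerivAt (fun q => desingKernel q x) (exp (-(p * x))) p := by
  have h := (((hasDerivAt_mul_const (x := p) x).fun_neg.exp).const_sub 1).div_const x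
  exact h.congr_deriv (by field_simp)

lemma hasDerivAt_desingKernel (p : ℝ) (hx : x ≠ 0) :
    HasDerivAt (desingKernel p) (-((desingKernel p x - p * exp (-(p * x))) / x)) x := by
  have h := (((hasDerivAt_const_mul (x := x) p).fun_neg.exp).const_sub 1).fun_div
    (hasDerivAt_id x) hx
  refine h.congr_deriv ?_
  rw [desingKernel]
  simp only [id]
  field_simp
  ring

lemma lintegral_Ioo_deriv_desingKernel (p : ℝ) (hy : 0 < y) (hz : 0 ≤ z) :
    ∫⁻ x in Ioo y (y + z), ENNReal.ofReal ((desingKernel p x - p * exp (-(p * x))) / x) =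
      ENNReal.ofReal (desingKernel p y - desingKernel p (y + z)) := by
  have hyz : y ≤ y + z := le_add_of_nonneg_right hz
  have pos_of_mem : ∀ x ∈ Icc y (y + z), 0 < x := fun x hx => hy.trans_le hx.1
  have hcont : ContinuousOn (fun x => (desingKernel p x - p * exp (-(p * x))) / x)
      (Icc y (y + z)) := by
    refine ContinuousOn.div (ContinuousOn.sub (fun x hx => ?_) (by fun_prop)) continuousOn_id
      fun x hx => (pos_of_mem x hx).ne'
    exact (hasDerivAt_desingKernel p (pos_of_mem x hx).ne').continuousAt.continuousWithinAt
  have hint : ∫ x in y..y + z, -((desingKernel p x - p * exp (-(p * x))) / x) =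
      desingKernel p (y + z) - desingKernel p y := by
    rw [← uIcc_of_le hyz] at hcont
    exact intervalIntegral.integral_eq_sub_of_hasDerivAt (fun x hx =>
      hasDerivAt_desingKernel p (pos_of_mem x (uIcc_of_le hyz ▸ hx)).ne')
      hcont.neg.intervalIntegrable
  rw [intervalIntegral.integral_neg, intervalIntegral.integral_of_le hyz,
    integral_Ioc_eq_integral_Ioo] at hint
  rw [← ofReal_integral_eq_lintegral_ofReal
    (hcont.integrableOn_Icc.mono_set Ioo_subset_Icc_self)]
  · congr 1; linarith
  · filter_upwards [ae_restrict_mem measurableSet_Ioo] with x hx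
    have hx0 := pos_of_mem x (Ioo_subset_Icc_self hx)
    exact div_nonneg (sub_nonneg.2 (mul_exp_le_desingKernel hx0)) hx0.le

lemma antitoneOn_desingKernel (p : ℝ) : AntitoneOn (desingKernel p) (Ioi 0) := by
  refine antitoneOn_of_deriv_nonpos (convex_Ioi 0)
    (fun x hx => (hasDerivAt_desingKernel p (ne_of_gt hx)).continuousAt.continuousWithinAt)
    (fun x hx => ?_) fun x hx => ?_ <;> rw [interior_Ioi] at hx
  · exact (hasDerivAt_desingKernel p (ne_of_gt hx)).differentiableAt.differentiableWithinAt
  · rw [(hasDerivAt_desingKernel p (ne_of_gt hx)).deriv]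
    exact neg_nonpos.2 (div_nonneg (sub_nonneg.2 (mul_exp_le_desingKernel hx)) (le_of_lt hx))

lemma desingKernel_sub_div_add_sub_div (p : ℝ) (hy : y ≠ 0) (hz : z ≠ 0) (hyz : y + z ≠ 0) :
    (desingKernel p y - desingKernel p (y + z)) / z +
      (desingKernel p z - desingKernel p (y + z)) / y = desingKernel p y * desingKernel p z := by
  have hexp : exp (-(p * (y + z))) = exp (-(p * y)) * exp (-(p * z)) := by
    rw [← exp_add]; ring_nf
  rw [desingKernel, desingKernel, desingKernel, hexp]
  field_simp
  ring

end Kernel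

/-! ### Profile equation for measures -/

/-- The perturbations of the constant kernel `2`: symmetric kernels that lie between `2` and
`2 + ε ((x/y)^α + (y/x)^α)`. All conditions are on the open quadrant, where the profile equation
evaluates `K`. -/
structure IsPerturbedKernel (α ε : ℝ) (K : ℝ → ℝ → ℝ) : Prop where
  aemeasurable : AEMeasurable (Function.uncurry K)
    ((volume.restrict (Ioi 0)).prod (volume.restrict (Ioi 0)))
  symm : ∀ x > 0, ∀ y > 0, K x y = K y x
  two_le : ∀ x > 0, ∀ y > 0, 2 ≤ K x y
  le_two_add : ∀ x > 0, ∀ y > 0, K x y ≤ 2 + ε * ((x / y) ^ α + (y / x) ^ α)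

/-- `ρ` is the mass measure `x φ(x) dx` of a self-similar profile `φ` for `K`: it lives on `(0, ∞)`
and `x² φ(x)` is the mass flux across `x`. Unlike the equation for `φ`, this one is between
measures with values in `[0, ∞]`, so that no integrability of the flux is presupposed. -/
structure IsMassProfile (K : ℝ → ℝ → ℝ) (ρ : Measure ℝ) : Prop where
  absolutelyContinuous : ρ ≪ volume.restrict (Ioi 0)
  withDensity_id_eq : ρ.withDensity ENNReal.ofReal = volume.withDensity (massFlux K ρ)

lemma IsPerturbedKernel.eps_nonneg {α ε : ℝ} {K : ℝ → ℝ → ℝ} (hK : IsPerturbedKernel α ε K) :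
    0 ≤ ε := by
  have h := (hK.two_le 1 one_pos 1 one_pos).trans (hK.le_two_add 1 one_pos 1 one_pos)
  norm_num at h
  exact h

section PositiveMeasure

variable {ρ : Measure ℝ} {α ε : ℝ} {K : ℝ → ℝ → ℝ}

lemma ae_pos_of_absolutelyContinuous (hρ : ρ ≪ volume.restrict (Ioi 0)) : ∀ᵐ x ∂ρ, 0 < x :=
  hρ.ae_le (ae_restrict_mem measurableSet_Ioi)

lemma IsPerturbedKernel.aemeasurable_prod (hK : IsPerturbedKernel α ε K)
    (hρ : ρ ≪ volume.restrict (Ioi 0)) : AEMeasurable (fun w => K w.1 w.2) (ρ.prod ρ) :=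
  hK.aemeasurable.mono_ac (hρ.prod hρ)

lemma ae_prod_pos (hρ : ∀ᵐ x ∂ρ, 0 < x) : ∀ᵐ w ∂ρ.prod ρ, 0 < w.1 ∧ 0 < w.2 :=
  (Measure.quasiMeasurePreserving_fst.ae hρ).and (Measure.quasiMeasurePreserving_snd.ae hρ)

lemma IsPerturbedKernel.aemeasurable_ofReal_div (hK : IsPerturbedKernel α ε K)
    (hρ : ρ ≪ volume.restrict (Ioi 0)) :
    AEMeasurable (fun w => ENNReal.ofReal (K w.1 w.2 / w.2)) (ρ.prod ρ) :=
  ((hK.aemeasurable_prod hρ).div measurable_snd.aemeasurable).ennreal_ofReal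

variable [SFinite ρ]

lemma IsPerturbedKernel.measurable_massFlux (hK : IsPerturbedKernel α ε K)
    (hρ : ρ ≪ volume.restrict (Ioi 0)) : Measurable (massFlux K ρ) :=
  measurable_setLIntegral_fluxRegion (hK.aemeasurable_ofReal_div hρ)

lemma IsPerturbedKernel.two_mul_lintegral_div_mul (hK : IsPerturbedKernel α ε K)
    (hρ : ρ ≪ volume.restrict (Ioi 0)) {F : ℝ × ℝ → ENNReal} (hF : Measurable F) :
    2 * ∫⁻ w, ENNReal.ofReal (K w.1 w.2 / w.2) * F w ∂ρ.prod ρ =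
      ∫⁻ w, ENNReal.ofReal (K w.1 w.2 / w.2) * F w +
        ENNReal.ofReal (K w.1 w.2 / w.1) * F w.swap ∂ρ.prod ρ := by
  have hmeas : AEMeasurable (fun w => ENNReal.ofReal (K w.1 w.2 / w.2) * F w) (ρ.prod ρ) :=
    (hK.aemeasurable_ofReal_div hρ).mul hF.aemeasurable
  rw [lintegral_add_left' hmeas, two_mul]
  congr 1
  rw [← lintegral_prod_swap]
  refine lintegral_congr_ae ?_
  filter_upwards [ae_prod_pos (ae_pos_of_absolutelyContinuous hρ)] with w hw
  rw [Prod.fst_swap, Prod.snd_swap, hK.symm _ hw.1 _ hw.2]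

lemma IsMassProfile.lintegral_ofReal_mul (h : IsMassProfile K ρ) (hK : IsPerturbedKernel α ε K)
    {f : ℝ → ENNReal} (hf : Measurable f) :
    ∫⁻ x, ENNReal.ofReal x * f x ∂ρ = ∫⁻ w, ENNReal.ofReal (K w.1 w.2 / w.2) *
      (∫⁻ x in Ioo w.1 (w.1 + w.2), f x) ∂ρ.prod ρ := by
  have hk := hK.aemeasurable_ofReal_div h.absolutelyContinuous
  have hdens := congrArg (fun ν => ∫⁻ x, f x ∂ν) h.withDensity_id_eq
  simp only [lintegral_withDensity_eq_lintegral_mul _ ENNReal.measurable_ofReal hf,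
    lintegral_withDensity_eq_lintegral_mul _ (hK.measurable_massFlux h.absolutelyContinuous) hf,
    Pi.mul_apply] at hdens
  rw [hdens, ← lintegral_mul_setLIntegral_fluxRegion volume hf hk]
  simp only [massFlux, mul_comm]

/-- Testing the profile equation with `-∂ₓ desingKernel` makes the right-hand side quadratic in the
desingularised Laplace transform, once it is symmetrised. -/
lemma IsMassProfile.two_mul_lintegral_desingKernel_sub (h : IsMassProfile K ρ)
    (hK : IsPerturbedKernel α ε K) (p : ℝ) :
    2 * ∫⁻ x, ENNReal.ofReal (desingKernel p x - p * exp (-(p * x))) ∂ρ =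
      ∫⁻ w, ENNReal.ofReal (K w.1 w.2 * (desingKernel p w.1 * desingKernel p w.2)) ∂ρ.prod ρ := by
  have hpos := ae_pos_of_absolutelyContinuous h.absolutelyContinuous
  have htest : ∫⁻ x, ENNReal.ofReal (desingKernel p x - p * exp (-(p * x))) ∂ρ =
      ∫⁻ w, ENNReal.ofReal (K w.1 w.2 / w.2) *
        ENNReal.ofReal (desingKernel p w.1 - desingKernel p (w.1 + w.2)) ∂ρ.prod ρ := by
    have hweak := h.lintegral_ofReal_mul hK
      (f := fun x => ENNReal.ofReal ((desingKernel p x - p * exp (-(p * x))) / x)) (by fun_prop)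
    convert hweak using 1 <;> refine lintegral_congr_ae ?_
    · filter_upwards [hpos] with x hx
      rw [← ENNReal.ofReal_mul hx.le, mul_div_cancel₀ _ hx.ne']
    · filter_upwards [ae_prod_pos hpos] with w hw
      rw [lintegral_Ioo_deriv_desingKernel p hw.1 hw.2.le]
  rw [htest, hK.two_mul_lintegral_div_mul h.absolutelyContinuous (by fun_prop)]
  refine lintegral_congr_ae ?_
  filter_upwards [ae_prod_pos hpos] with w ⟨hy, hz⟩
  have hyz : 0 < w.1 + w.2 := add_pos hy hz
  have hK0 : 0 ≤ K w.1 w.2 := by linarith [hK.two_le _ hy _ hz]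
  have hgy : desingKernel p (w.1 + w.2) ≤ desingKernel p w.1 :=
    antitoneOn_desingKernel p hy hyz (by linarith)
  have hgz : desingKernel p (w.1 + w.2) ≤ desingKernel p w.2 :=
    antitoneOn_desingKernel p hz hyz (by linarith)
  rw [Prod.fst_swap, Prod.snd_swap, add_comm w.2 w.1,
    ← ENNReal.ofReal_mul (div_nonneg hK0 hz.le), ← ENNReal.ofReal_mul (div_nonneg hK0 hy.le),
    ← ENNReal.ofReal_add (mul_nonneg (div_nonneg hK0 hz.le) (sub_nonneg.2 hgy))
      (mul_nonneg (div_nonneg hK0 hy.le) (sub_nonneg.2 hgz)),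
    ← desingKernel_sub_div_add_sub_div p hy.ne' hz.ne' hyz.ne']
  congr 1
  ring

end PositiveMeasure

/-! ### Riccati inequality for the desingularised Laplace transform -/

/-- The Laplace transform of `ρ`, as the average of `e^{-px}`. -/
noncomputable def laplaceTransform (ρ : Measure ℝ) (p : ℝ) : ℝ := ∫ x, exp (-(p * x)) ∂ρ

/-- The average of `(1 - e^{-px}) / x`. When `ρ = x φ(x) dx` is a mass measure this is the
desingularised Laplace transform `∫ (1 - e^{-px}) φ(x) dx` of `φ`. -/
noncomputable def desingLaplace (ρ : Measure ℝ) (p : ℝ) : ℝ := ∫ x, desingKernel p x ∂ρ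

section LaplaceTransform

variable {ρ : Measure ℝ} [IsFiniteMeasure ρ] {p : ℝ}

lemma integrable_exp_neg_mul (hρ : ∀ᵐ x ∂ρ, 0 < x) (hp : 0 ≤ p) :
    Integrable (fun x => exp (-(p * x))) ρ := by
  refine Integrable.of_bound (by fun_prop) 1 ?_
  filter_upwards [hρ] with x hx
  rw [norm_of_nonneg (exp_pos _).le, exp_le_one_iff, neg_nonpos]
  exact mul_nonneg hp hx.le

lemma integrable_desingKernel (hρ : ∀ᵐ x ∂ρ, 0 < x) (hp : 0 ≤ p) :
    Integrable (desingKernel p) ρ := by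
  refine Integrable.of_bound (measurable_desingKernel p).aestronglyMeasurable p ?_
  filter_upwards [hρ] with x hx
  rw [norm_of_nonneg (desingKernel_nonneg hp hx)]
  exact desingKernel_le hx

lemma mul_laplaceTransform_le_desingLaplace (hρ : ∀ᵐ x ∂ρ, 0 < x) (hp : 0 ≤ p) :
    p * laplaceTransform ρ p ≤ desingLaplace ρ p := by
  rw [laplaceTransform, ← integral_const_mul]
  refine integral_mono_ae ((integrable_exp_neg_mul hρ hp).const_mul p)
    (integrable_desingKernel hρ hp) ?_
  filter_upwards [hρ] with x hx using mul_exp_le_desingKernel hx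

lemma hasDerivAt_desingLaplace (hρ : ∀ᵐ x ∂ρ, 0 < x) (hp : 0 < p) :
    HasDerivAt (desingLaplace ρ) (laplaceTransform ρ p) p := by
  refine (hasDerivAt_integral_of_dominated_loc_of_deriv_le (bound := fun _ => 1)
    (F' := fun q x => exp (-(q * x))) (Ioi_mem_nhds hp)
    (Eventually.of_forall fun q => (measurable_desingKernel q).aestronglyMeasurable)
    (integrable_desingKernel hρ hp.le) (by fun_prop) ?_ (integrable_const 1) ?_).2
  · filter_upwards [hρ] with x hx q hq
    rw [norm_of_nonneg (exp_pos _).le, exp_le_one_iff, neg_nonpos]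
    exact (mul_pos hq hx).le
  · filter_upwards [hρ] with x hx q _ using hasDerivAt_desingKernel_left hx.ne' q

lemma lintegral_ofReal_desingKernel (hρ : ∀ᵐ x ∂ρ, 0 < x) (hp : 0 ≤ p) :
    ∫⁻ x, ENNReal.ofReal (desingKernel p x) ∂ρ = ENNReal.ofReal (desingLaplace ρ p) := by
  refine (ofReal_integral_eq_lintegral_ofReal (integrable_desingKernel hρ hp) ?_).symm
  filter_upwards [hρ] with x hx using desingKernel_nonneg hp hx

lemma lintegral_ofReal_desingKernel_sub (hρ : ∀ᵐ x ∂ρ, 0 < x) (hp : 0 ≤ p) :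
    ∫⁻ x, ENNReal.ofReal (desingKernel p x - p * exp (-(p * x))) ∂ρ =
      ENNReal.ofReal (desingLaplace ρ p - p * laplaceTransform ρ p) := by
  have hexp := (integrable_exp_neg_mul hρ hp).const_mul p
  rw [desingLaplace, laplaceTransform, ← integral_const_mul,
    ← integral_sub (integrable_desingKernel hρ hp) hexp]
  refine (ofReal_integral_eq_lintegral_ofReal ((integrable_desingKernel hρ hp).sub hexp) ?_).symm
  filter_upwards [hρ] with x hx using sub_nonneg.2 (mul_exp_le_desingKernel hx)

end LaplaceTransform

section ProbabilityMeasure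

variable {ρ : Measure ℝ} [IsProbabilityMeasure ρ] {p : ℝ}

lemma desingLaplace_le (hρ : ∀ᵐ x ∂ρ, 0 < x) (hp : 0 ≤ p) : desingLaplace ρ p ≤ p := by
  calc desingLaplace ρ p ≤ ∫ _, p ∂ρ := by
        refine integral_mono_ae (integrable_desingKernel hρ hp) (integrable_const p) ?_
        filter_upwards [hρ] with x hx using desingKernel_le hx
    _ = p := by simp

lemma desingLaplace_pos (hρ : ∀ᵐ x ∂ρ, 0 < x) (hp : 0 < p) : 0 < desingLaplace ρ p :=
  (mul_pos hp (integral_exp_pos (integrable_exp_neg_mul hρ hp.le))).trans_le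
    (mul_laplaceTransform_le_desingLaplace hρ hp.le)

lemma tendsto_laplaceTransform_zero (hρ : ∀ᵐ x ∂ρ, 0 < x) :
    Tendsto (laplaceTransform ρ) (nhdsWithin 0 (Ioi 0)) (nhds 1) := by
  have h : Tendsto (laplaceTransform ρ) (nhdsWithin 0 (Ioi 0)) (nhds (∫ _, 1 ∂ρ)) := by
    refine tendsto_integral_filter_of_dominated_convergence (fun _ => 1)
      (Eventually.of_forall fun q => by fun_prop) ?_ (integrable_const 1) ?_
    · filter_upwards [self_mem_nhdsWithin] with q hq
      filter_upwards [hρ] with x hx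
      rw [norm_of_nonneg (exp_pos _).le, exp_le_one_iff, neg_nonpos]
      exact (mul_pos hq hx).le
    · refine Eventually.of_forall fun x => ?_
      have hcont : Continuous fun q : ℝ => exp (-(q * x)) := by fun_prop
      exact (hcont.tendsto' 0 1 (by simp)).mono_left nhdsWithin_le_nhds
  simpa only [integral_const, probReal_univ, one_smul] using h

lemma tendsto_desingLaplace_div (hρ : ∀ᵐ x ∂ρ, 0 < x) :
    Tendsto (fun p => desingLaplace ρ p / p) (nhdsWithin 0 (Ioi 0)) (nhds 1) := by
  refine tendsto_of_tendsto_of_tendsto_of_le_of_le' (tendsto_laplaceTransform_zero hρ)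
    tendsto_const_nhds ?_ ?_
  · filter_upwards [self_mem_nhdsWithin] with p hp
    rw [le_div_iff₀' hp]
    exact mul_laplaceTransform_le_desingLaplace hρ (le_of_lt hp)
  · filter_upwards [self_mem_nhdsWithin] with p hp
    exact (div_le_one hp).2 (desingLaplace_le hρ (le_of_lt hp))

end ProbabilityMeasure

section Riccati

lemma le_of_hasDerivAt_nonneg_of_tendsto {u u' : ℝ → ℝ} {a b l : ℝ}
    (hu : ∀ q > a, HasDerivAt u (u' q) q) (hu' : ∀ q > a, 0 ≤ u' q)
    (hl : Tendsto u (nhdsWithin a (Ioi a)) (nhds l)) (hab : a < b) : l ≤ u b := by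
  have hmono : MonotoneOn u (Ioi a) := by
    refine monotoneOn_of_deriv_nonneg (convex_Ioi a)
      (fun q hq => (hu q hq).continuousAt.continuousWithinAt) (fun q hq => ?_) fun q hq => ?_ <;>
      rw [interior_Ioi] at hq
    · exact (hu q hq).differentiableAt.differentiableWithinAt
    · exact (hu q hq).deriv ▸ hu' q hq
  refine le_of_tendsto hl ?_
  filter_upwards [Ioo_mem_nhdsGT hab] with q hq using hmono hq.1 hab hq.2.le

variable {α ε p : ℝ} {K : ℝ → ℝ → ℝ} {ρ : Measure ℝ}

lemma IsMassProfile.sq_desingLaplace_le [IsFiniteMeasure ρ] (h : IsMassProfile K ρ)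
    (hK : IsPerturbedKernel α ε K) (hp : 0 ≤ p) :
    desingLaplace ρ p ^ 2 ≤ desingLaplace ρ p - p * laplaceTransform ρ p := by
  have hpos := ae_pos_of_absolutelyContinuous h.absolutelyContinuous
  have hg : AEMeasurable (fun x => ENNReal.ofReal (desingKernel p x)) ρ :=
    (measurable_desingKernel p).ennreal_ofReal.aemeasurable
  have hle : 2 * ENNReal.ofReal (desingLaplace ρ p ^ 2) ≤
      2 * ENNReal.ofReal (desingLaplace ρ p - p * laplaceTransform ρ p) := by
    calc 2 * ENNReal.ofReal (desingLaplace ρ p ^ 2)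
        = 2 * ∫⁻ w, ENNReal.ofReal (desingKernel p w.1) *
            ENNReal.ofReal (desingKernel p w.2) ∂ρ.prod ρ := by
          rw [lintegral_prod_mul hg hg, lintegral_ofReal_desingKernel hpos hp, ← sq,
            ENNReal.ofReal_pow]
          exact integral_nonneg_of_ae (hpos.mono fun x hx => desingKernel_nonneg hp hx)
      _ = ∫⁻ w, 2 * (ENNReal.ofReal (desingKernel p w.1) *
            ENNReal.ofReal (desingKernel p w.2)) ∂ρ.prod ρ :=
          (lintegral_const_mul' _ _ (by norm_num)).symm
      _ ≤ ∫⁻ w, ENNReal.ofReal (K w.1 w.2 * (desingKernel p w.1 * desingKernel p w.2))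
            ∂ρ.prod ρ := by
          refine lintegral_mono_ae ?_
          filter_upwards [ae_prod_pos hpos] with w ⟨hy, hz⟩
          have hgy := desingKernel_nonneg hp hy
          have hgz := desingKernel_nonneg hp hz
          rw [← ENNReal.ofReal_mul hgy, ← ENNReal.ofReal_ofNat 2, ← ENNReal.ofReal_mul zero_le_two]
          exact ENNReal.ofReal_le_ofReal
            (mul_le_mul_of_nonneg_right (hK.two_le _ hy _ hz) (mul_nonneg hgy hgz))
      _ = 2 * ENNReal.ofReal (desingLaplace ρ p - p * laplaceTransform ρ p) := by
          rw [← h.two_mul_lintegral_desingKernel_sub hK, lintegral_ofReal_desingKernel_sub hpos hp]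
  refine (ENNReal.ofReal_le_ofReal_iff (sub_nonneg.2 ?_)).1
    ((ENNReal.mul_le_mul_iff_right two_ne_zero ENNReal.ofNat_ne_top).1 hle)
  exact mul_laplaceTransform_le_desingLaplace hpos hp

variable [IsProbabilityMeasure ρ]

lemma IsMassProfile.desingLaplace_le_div (h : IsMassProfile K ρ) (hK : IsPerturbedKernel α ε K)
    (hp : 0 < p) : desingLaplace ρ p ≤ p / (1 + p) := by
  have hpos := ae_pos_of_absolutelyContinuous h.absolutelyContinuous
  have hlim : Tendsto (fun q => q / desingLaplace ρ q - q) (nhdsWithin 0 (Ioi 0)) (nhds 1) := by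
    have hinv := (tendsto_desingLaplace_div hpos).inv₀ one_ne_zero
    simpa only [inv_div, inv_one, id, sub_zero] using
      hinv.sub ((continuous_id.tendsto 0).mono_left nhdsWithin_le_nhds)
  have hmono : 1 ≤ p / desingLaplace ρ p - p := by
    refine le_of_hasDerivAt_nonneg_of_tendsto (u := fun q => q / desingLaplace ρ q - q)
      (fun q hq => ((hasDerivAt_id q).fun_div (hasDerivAt_desingLaplace hpos hq)
        (desingLaplace_pos hpos hq).ne').fun_sub (hasDerivAt_id q)) (fun q hq => ?_) hlim hp
    rw [sub_nonneg, one_le_div (pow_pos (desingLaplace_pos hpos hq) 2), id, one_mul]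
    exact h.sq_desingLaplace_le hK (le_of_lt hq)
  rw [le_sub_iff_add_le, le_div_iff₀ (desingLaplace_pos hpos hp)] at hmono
  rwa [le_div_iff₀ (by linarith), mul_comm]

lemma IsMassProfile.lintegral_inv_le_one (h : IsMassProfile K ρ) (hK : IsPerturbedKernel α ε K) :
    ∫⁻ x, ENNReal.ofReal x⁻¹ ∂ρ ≤ 1 := by
  have hpos := ae_pos_of_absolutelyContinuous h.absolutelyContinuous
  have hlim : ∀ x > 0, Tendsto (fun n : ℕ => ENNReal.ofReal (desingKernel n x)) atTop
      (nhds (ENNReal.ofReal x⁻¹)) := fun x hx => by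
    have hexp : Tendsto (fun n : ℕ => exp (-(n * x))) atTop (nhds 0) :=
      tendsto_exp_neg_atTop_nhds_zero.comp (tendsto_natCast_atTop_atTop.atTop_mul_const hx)
    refine (ENNReal.continuous_ofReal.tendsto _).comp ?_
    simpa only [desingKernel, sub_zero, one_div] using (hexp.const_sub 1).div_const x
  calc ∫⁻ x, ENNReal.ofReal x⁻¹ ∂ρ
      = ∫⁻ x, liminf (fun n : ℕ => ENNReal.ofReal (desingKernel n x)) atTop ∂ρ :=
        lintegral_congr_ae (hpos.mono fun x hx => (hlim x hx).liminf_eq.symm)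
    _ ≤ liminf (fun n : ℕ => ∫⁻ x, ENNReal.ofReal (desingKernel n x) ∂ρ) atTop :=
        lintegral_liminf_le fun n => (measurable_desingKernel n).ennreal_ofReal
    _ ≤ liminf (fun _ : ℕ => (1 : ENNReal)) atTop := by
        refine liminf_le_liminf ?_
        filter_upwards [eventually_gt_atTop 0] with n hn
        have hn' : (0 : ℝ) < n := Nat.cast_pos.2 hn
        rw [lintegral_ofReal_desingKernel hpos hn'.le, ENNReal.ofReal_le_one]
        exact (h.desingLaplace_le_div hK hn').trans ((div_le_one (by linarith)).2 (by linarith))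
    _ = 1 := liminf_const 1

end Riccati

/-! ### Laplace transforms as `ε → 0` -/

lemma rpow_le_one_add {α t : ℝ} (hα : α ∈ Icc (0 : ℝ) 1) (ht : 0 ≤ t) : t ^ α ≤ 1 + t := by
  rcases le_total t 1 with h | h
  · linarith [rpow_le_one ht h hα.1]
  · calc t ^ α ≤ t ^ (1 : ℝ) := rpow_le_rpow_of_exponent_le h hα.2
      _ ≤ 1 + t := by rw [rpow_one]; linarith

section UpperBound

variable {α p x : ℝ}

lemma rpow_mul_desingKernel_le (hα : α ∈ Icc (0 : ℝ) 1) (hp : 0 ≤ p) (hx : 0 < x) :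
    x ^ α * desingKernel p x ≤ p ^ (1 - α) := by
  have hg := desingKernel_nonneg hp hx
  have hxg : x * desingKernel p x ≤ 1 := by
    calc x * desingKernel p x ≤ x * x⁻¹ :=
          mul_le_mul_of_nonneg_left (desingKernel_le_inv hx) hx.le
      _ = 1 := mul_inv_cancel₀ hx.ne'
  calc x ^ α * desingKernel p x
      = x ^ α * (desingKernel p x ^ α * desingKernel p x ^ (1 - α)) := by
        rw [← rpow_add_of_nonneg hg hα.1 (sub_nonneg.2 hα.2), add_sub_cancel, rpow_one]
    _ = (x * desingKernel p x) ^ α * desingKernel p x ^ (1 - α) := by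
        rw [mul_rpow hx.le hg, mul_assoc]
    _ ≤ 1 * p ^ (1 - α) := mul_le_mul (rpow_le_one (mul_nonneg hx.le hg) hxg hα.1)
        (rpow_le_rpow hg (desingKernel_le hx) (sub_nonneg.2 hα.2)) (rpow_nonneg hg _) zero_le_one
    _ = p ^ (1 - α) := one_mul _

lemma rpow_neg_mul_desingKernel_le (hα : α ∈ Icc (0 : ℝ) 1) (hp : 0 ≤ p) (hx : 0 < x) :
    x ^ (-α) * desingKernel p x ≤ p * (1 + x⁻¹) := by
  rw [mul_comm p]
  have hxα : x ^ (-α) ≤ 1 + x⁻¹ := by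
    rw [rpow_neg_eq_inv_rpow]
    exact rpow_le_one_add hα (inv_pos.2 hx).le
  exact mul_le_mul hxα (desingKernel_le hx) (desingKernel_nonneg hp hx)
    (by positivity)

variable {ε : ℝ} {K : ℝ → ℝ → ℝ} {ρ : Measure ℝ}

lemma IsPerturbedKernel.mul_desingKernel_mul_le (hK : IsPerturbedKernel α ε K) (hp : 0 ≤ p)
    {y z : ℝ} (hy : 0 < y) (hz : 0 < z) :
    K y z * (desingKernel p y * desingKernel p z) ≤ 2 * (desingKernel p y * desingKernel p z) +
      ε * ((y ^ α * desingKernel p y) * (z ^ (-α) * desingKernel p z) +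
        (y ^ (-α) * desingKernel p y) * (z ^ α * desingKernel p z)) := by
  have hgg := mul_nonneg (desingKernel_nonneg hp hy) (desingKernel_nonneg hp hz)
  refine (mul_le_mul_of_nonneg_right (hK.le_two_add y hy z hz) hgg).trans_eq ?_
  rw [div_rpow hy.le hz.le, div_rpow hz.le hy.le, rpow_neg hy.le, rpow_neg hz.le]
  ring

lemma IsMassProfile.two_mul_ofReal_desingLaplace_sub_le [IsFiniteMeasure ρ]
    (h : IsMassProfile K ρ) (hK : IsPerturbedKernel α ε K) (hp : 0 ≤ p) :
    2 * ENNReal.ofReal (desingLaplace ρ p - p * laplaceTransform ρ p) ≤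
      2 * ENNReal.ofReal (desingLaplace ρ p) ^ 2 +
        ENNReal.ofReal ε * (2 * ((∫⁻ x, ENNReal.ofReal (x ^ α * desingKernel p x) ∂ρ) *
          ∫⁻ x, ENNReal.ofReal (x ^ (-α) * desingKernel p x) ∂ρ)) := by
  have hpos := ae_pos_of_absolutelyContinuous h.absolutelyContinuous
  have hmeas : ∀ β : ℝ, Measurable fun x => ENNReal.ofReal (x ^ β * desingKernel p x) := fun β =>
    ((measurable_id.pow_const β).mul (measurable_desingKernel p)).ennreal_ofReal
  have hmeas₀ := (measurable_desingKernel p).ennreal_ofReal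
  rw [← lintegral_ofReal_desingKernel_sub hpos hp, h.two_mul_lintegral_desingKernel_sub hK]
  calc ∫⁻ w, ENNReal.ofReal (K w.1 w.2 * (desingKernel p w.1 * desingKernel p w.2)) ∂ρ.prod ρ
      ≤ ∫⁻ w, 2 * (ENNReal.ofReal (desingKernel p w.1) * ENNReal.ofReal (desingKernel p w.2)) +
          ENNReal.ofReal ε * (ENNReal.ofReal (w.1 ^ α * desingKernel p w.1) *
              ENNReal.ofReal (w.2 ^ (-α) * desingKernel p w.2) +
            ENNReal.ofReal (w.1 ^ (-α) * desingKernel p w.1) *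
              ENNReal.ofReal (w.2 ^ α * desingKernel p w.2)) ∂ρ.prod ρ := by
        refine lintegral_mono_ae ((ae_prod_pos hpos).mono fun w ⟨hy, hz⟩ => ?_)
        have hgy := desingKernel_nonneg hp hy
        have hgz := desingKernel_nonneg hp hz
        have hyβ : ∀ β : ℝ, 0 ≤ w.1 ^ β * desingKernel p w.1 := fun β => by positivity
        have hε := hK.eps_nonneg
        refine (ENNReal.ofReal_le_ofReal (hK.mul_desingKernel_mul_le hp hy hz)).trans_eq ?_
        rw [ENNReal.ofReal_add (by positivity) (by positivity), ENNReal.ofReal_mul zero_le_two,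
          ENNReal.ofReal_mul hgy, ENNReal.ofReal_mul hε,
          ENNReal.ofReal_add (by positivity) (by positivity), ENNReal.ofReal_mul (hyβ α),
          ENNReal.ofReal_mul (hyβ (-α)), ENNReal.ofReal_ofNat]
    _ = _ := by
        rw [lintegral_add_left (by fun_prop), lintegral_const_mul _ (by fun_prop),
          lintegral_const_mul _ (by fun_prop), lintegral_add_left (by fun_prop),
          lintegral_prod_mul hmeas₀.aemeasurable hmeas₀.aemeasurable,
          lintegral_prod_mul (hmeas α).aemeasurable (hmeas (-α)).aemeasurable,
          lintegral_prod_mul (hmeas (-α)).aemeasurable (hmeas α).aemeasurable,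
          lintegral_ofReal_desingKernel hpos hp]
        ring

variable [IsProbabilityMeasure ρ]

lemma lintegral_rpow_mul_desingKernel_le (hρ : ∀ᵐ x ∂ρ, 0 < x) (hα : α ∈ Icc (0 : ℝ) 1)
    (hp : 0 ≤ p) :
    ∫⁻ x, ENNReal.ofReal (x ^ α * desingKernel p x) ∂ρ ≤ ENNReal.ofReal (p ^ (1 - α)) := by
  calc ∫⁻ x, ENNReal.ofReal (x ^ α * desingKernel p x) ∂ρ
      ≤ ∫⁻ _, ENNReal.ofReal (p ^ (1 - α)) ∂ρ := lintegral_mono_ae <| hρ.mono fun x hx =>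
        ENNReal.ofReal_le_ofReal (rpow_mul_desingKernel_le hα hp hx)
    _ = ENNReal.ofReal (p ^ (1 - α)) := by rw [lintegral_const, measure_univ, mul_one]

lemma lintegral_rpow_neg_mul_desingKernel_le (hρ : ∀ᵐ x ∂ρ, 0 < x)
    (hinv : ∫⁻ x, ENNReal.ofReal x⁻¹ ∂ρ ≤ 1) (hα : α ∈ Icc (0 : ℝ) 1) (hp : 0 ≤ p) :
    ∫⁻ x, ENNReal.ofReal (x ^ (-α) * desingKernel p x) ∂ρ ≤ ENNReal.ofReal (2 * p) := by
  calc ∫⁻ x, ENNReal.ofReal (x ^ (-α) * desingKernel p x) ∂ρ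
      ≤ ∫⁻ x, ENNReal.ofReal p * (1 + ENNReal.ofReal x⁻¹) ∂ρ := by
        refine lintegral_mono_ae (hρ.mono fun x hx => ?_)
        rw [← ENNReal.ofReal_one, ← ENNReal.ofReal_add zero_le_one (inv_pos.2 hx).le,
          ← ENNReal.ofReal_mul hp]
        exact ENNReal.ofReal_le_ofReal (rpow_neg_mul_desingKernel_le hα hp hx)
    _ = ENNReal.ofReal p * (1 + ∫⁻ x, ENNReal.ofReal x⁻¹ ∂ρ) := by
        rw [lintegral_const_mul' _ _ ENNReal.ofReal_ne_top, lintegral_add_left measurable_const,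
          lintegral_const, measure_univ, mul_one]
    _ ≤ ENNReal.ofReal p * (1 + 1) := by gcongr
    _ = ENNReal.ofReal (2 * p) := by
        rw [one_add_one_eq_two, mul_comm, ENNReal.ofReal_mul zero_le_two, ENNReal.ofReal_ofNat]

lemma IsMassProfile.desingLaplace_sub_le (h : IsMassProfile K ρ) (hK : IsPerturbedKernel α ε K)
    (hα : α ∈ Icc (0 : ℝ) 1) (hp : 0 < p) :
    desingLaplace ρ p - p * laplaceTransform ρ p ≤
      desingLaplace ρ p ^ 2 + 2 * ε * p ^ (2 - α) := by
  have hpos := ae_pos_of_absolutelyContinuous h.absolutelyContinuous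
  have hQ := (desingLaplace_pos hpos hp).le
  have hε := hK.eps_nonneg
  have hpow : p ^ (1 - α) * (2 * p) = 2 * p ^ (2 - α) := by
    rw [show 2 - α = 1 - α + 1 by ring, rpow_add_one hp.ne']; ring
  have hle : 2 * ENNReal.ofReal (desingLaplace ρ p - p * laplaceTransform ρ p) ≤
      2 * ENNReal.ofReal (desingLaplace ρ p ^ 2 + 2 * ε * p ^ (2 - α)) := by
    calc _ ≤ _ := h.two_mul_ofReal_desingLaplace_sub_le hK hp.le
      _ ≤ 2 * ENNReal.ofReal (desingLaplace ρ p) ^ 2 + ENNReal.ofReal ε *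
            (2 * (ENNReal.ofReal (p ^ (1 - α)) * ENNReal.ofReal (2 * p))) := by
          gcongr
          · exact lintegral_rpow_mul_desingKernel_le hpos hα hp.le
          · exact lintegral_rpow_neg_mul_desingKernel_le hpos (h.lintegral_inv_le_one hK) hα hp.le
      _ = 2 * ENNReal.ofReal (desingLaplace ρ p ^ 2 + 2 * ε * p ^ (2 - α)) := by
          rw [← ENNReal.ofReal_mul (by positivity), hpow, ENNReal.ofReal_add (by positivity)
            (by positivity), ENNReal.ofReal_pow hQ, mul_comm 2 ε, mul_assoc,
            ENNReal.ofReal_mul hε]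
          ring
  exact (ENNReal.ofReal_le_ofReal_iff (by positivity)).1
    ((ENNReal.mul_le_mul_iff_right two_ne_zero ENNReal.ofNat_ne_top).1 hle)

lemma IsMassProfile.neg_le_laplaceTransform_div (h : IsMassProfile K ρ)
    (hK : IsPerturbedKernel α ε K) (hα : α ∈ Icc (0 : ℝ) 1) (hp : 0 < p) :
    -(2 * ε * p ^ (-α)) ≤
      (laplaceTransform ρ p * p - desingLaplace ρ p) / p ^ 2 + 1 / (1 + p) ^ 2 := by
  have hpos := ae_pos_of_absolutelyContinuous h.absolutelyContinuous
  have hupper := h.desingLaplace_sub_le hK hα hp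
  have hsq : desingLaplace ρ p ^ 2 ≤ (p / (1 + p)) ^ 2 :=
    pow_le_pow_left₀ (desingLaplace_pos hpos hp).le (h.desingLaplace_le_div hK hp) 2
  have hpow : p ^ (2 - α) = p ^ (-α) * p ^ 2 := by
    rw [← rpow_natCast, ← rpow_add hp]; congr 1; push_cast; ring
  calc -(2 * ε * p ^ (-α)) = -(2 * ε * p ^ (2 - α)) / p ^ 2 := by rw [hpow]; field_simp
    _ ≤ (laplaceTransform ρ p * p - desingLaplace ρ p + (p / (1 + p)) ^ 2) / p ^ 2 := by
        gcongr; linarith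
    _ = (laplaceTransform ρ p * p - desingLaplace ρ p) / p ^ 2 + 1 / (1 + p) ^ 2 := by
        field_simp

lemma IsMassProfile.div_sub_le_desingLaplace (h : IsMassProfile K ρ)
    (hK : IsPerturbedKernel α ε K) (hα : α ∈ Ico (0 : ℝ) 1) (hp : 0 < p) :
    p / (1 + p) - 2 * ε / (1 - α) * p ^ (2 - α) ≤ desingLaplace ρ p := by
  have hpos := ae_pos_of_absolutelyContinuous h.absolutelyContinuous
  have hα' : 0 < 1 - α := sub_pos.2 hα.2
  have hlim : Tendsto
      (fun q => desingLaplace ρ q / q - (1 + q)⁻¹ + 2 * ε / (1 - α) * q ^ (1 - α))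
      (nhdsWithin 0 (Ioi 0)) (nhds 0) := by
    have hinv : ContinuousAt (fun q : ℝ => (1 + q)⁻¹) 0 :=
      ContinuousAt.inv₀ (by fun_prop) (by norm_num)
    have hpow : ContinuousAt (fun q : ℝ => q ^ (1 - α)) 0 :=
      continuousAt_rpow_const 0 (1 - α) (Or.inr hα'.le)
    have := ((tendsto_desingLaplace_div hpos).sub (hinv.tendsto.mono_left nhdsWithin_le_nhds)).add
      ((hpow.tendsto.mono_left nhdsWithin_le_nhds).const_mul (2 * ε / (1 - α)))
    simpa only [add_zero, inv_one, sub_self, zero_rpow hα'.ne', mul_zero] using this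
  have hmono := le_of_hasDerivAt_nonneg_of_tendsto
    (fun q hq => (((hasDerivAt_desingLaplace hpos hq).fun_div (hasDerivAt_id q)
      (ne_of_gt hq)).fun_sub (((hasDerivAt_id q).const_add 1).fun_inv
        (by simp only [id]; linarith))).fun_add
      ((hasDerivAt_rpow_const (Or.inl (ne_of_gt hq))).const_mul (2 * ε / (1 - α))))
    (fun q hq => ?_) hlim hp
  · have hscaled := mul_nonneg hmono hp.le
    have hpow : p ^ (2 - α) = p ^ (1 - α) * p := by
      rw [← rpow_add_one hp.ne']; ring_nf
    rw [add_mul, sub_mul, id, div_mul_cancel₀ _ hp.ne', mul_assoc, ← hpow, inv_mul_eq_div]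
      at hscaled
    linarith
  · have hbound := h.neg_le_laplaceTransform_div hK ⟨hα.1, hα.2.le⟩ hq
    rw [sub_sub_cancel_left, ← mul_assoc, div_mul_cancel₀ _ hα'.ne', id, mul_one, neg_div]
    linarith

lemma tendsto_desingLaplace (hα : α ∈ Ico (0 : ℝ) 1) {ε : ℕ → ℝ} (hε : Tendsto ε atTop (nhds 0))
    {K : ℕ → ℝ → ℝ → ℝ} (hK : ∀ n, IsPerturbedKernel α (ε n) (K n)) {ρ : ℕ → Measure ℝ}
    [∀ n, IsProbabilityMeasure (ρ n)] (h : ∀ n, IsMassProfile (K n) (ρ n)) (hp : 0 < p) :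
    Tendsto (fun n => desingLaplace (ρ n) p) atTop (nhds (p / (1 + p))) := by
  refine tendsto_of_tendsto_of_tendsto_of_le_of_le ?_ tendsto_const_nhds
    (fun n => (h n).div_sub_le_desingLaplace (hK n) hα hp)
    fun n => (h n).desingLaplace_le_div (hK n) hp
  simpa only [mul_zero, zero_div, zero_mul, sub_zero] using
    (((hε.const_mul 2).div_const (1 - α)).mul_const (p ^ (2 - α))).const_sub (p / (1 + p))

lemma tendsto_laplaceTransform (hα : α ∈ Ico (0 : ℝ) 1) {ε : ℕ → ℝ}
    (hε : Tendsto ε atTop (nhds 0)) {K : ℕ → ℝ → ℝ → ℝ}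
    (hK : ∀ n, IsPerturbedKernel α (ε n) (K n)) {ρ : ℕ → Measure ℝ}
    [∀ n, IsProbabilityMeasure (ρ n)] (h : ∀ n, IsMassProfile (K n) (ρ n)) (hp : 0 ≤ p) :
    Tendsto (fun n => laplaceTransform (ρ n) p) atTop (nhds (1 / (1 + p) ^ 2)) := by
  rcases hp.eq_or_lt with rfl | hp
  · simp [laplaceTransform]
  have hQ := tendsto_desingLaplace hα hε hK h hp
  have herr : Tendsto (fun n => 2 * ε n * p ^ (2 - α)) atTop (nhds 0) := by
    simpa only [mul_zero, zero_mul] using (hε.const_mul 2).mul_const (p ^ (2 - α))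
  have hval : (p / (1 + p) - (p / (1 + p)) ^ 2) / p = 1 / (1 + p) ^ 2 := by field_simp; ring
  rw [← hval]
  refine tendsto_of_tendsto_of_tendsto_of_le_of_le
    (by simpa only [sub_zero] using (((hQ.sub (hQ.pow 2)).sub herr).div_const p))
    ((hQ.sub (hQ.pow 2)).div_const p) (fun n => ?_) fun n => ?_
  · rw [div_le_iff₀' hp]
    linarith [(h n).desingLaplace_sub_le (hK n) ⟨hα.1, hα.2.le⟩ hp]
  · rw [le_div_iff₀' hp]
    linarith [(h n).sq_desingLaplace_le (hK n) hp.le]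

end UpperBound

/-! ### Mass measures of densities -/

/-- The mass measure `x φ(x) dx` on `(0, ∞)` of a size distribution `φ`. -/
noncomputable def massMeasure (φ : ℝ → ℝ) : Measure ℝ :=
  (volume.restrict (Ioi 0)).withDensity fun x => ENNReal.ofReal (x * φ x)

lemma massMeasure_absolutelyContinuous (φ : ℝ → ℝ) : massMeasure φ ≪ volume.restrict (Ioi 0) :=
  withDensity_absolutelyContinuous _ _

section MassMeasure

variable {φ : ℝ → ℝ}

lemma ae_mul_nonneg_Ioi (h0 : ∀ᵐ x ∂volume.restrict (Ioi 0), 0 ≤ φ x) :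
    ∀ᵐ x ∂volume.restrict (Ioi 0), 0 ≤ x * φ x := by
  filter_upwards [h0, ae_restrict_mem measurableSet_Ioi] with x hφ hx using mul_nonneg hx.le hφ

lemma isProbabilityMeasure_massMeasure (h0 : ∀ᵐ x ∂volume.restrict (Ioi 0), 0 ≤ φ x)
    (h1 : IsNormalised φ) : IsProbabilityMeasure (massMeasure φ) := by
  have hint : IntegrableOn (fun x => x * φ x) (Ioi 0) :=
    not_imp_comm.1 integral_undef (by rw [h1]; exact one_ne_zero)
  constructor
  rw [massMeasure, withDensity_apply _ MeasurableSet.univ, Measure.restrict_univ,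
    ← ofReal_integral_eq_lintegral_ofReal hint (ae_mul_nonneg_Ioi h0), h1, ENNReal.ofReal_one]

lemma aemeasurable_mul_Ioi (hφ : AEMeasurable φ (volume.restrict (Ioi 0))) :
    AEMeasurable (fun x => ENNReal.ofReal (x * φ x)) (volume.restrict (Ioi 0)) :=
  (aemeasurable_id.mul hφ).ennreal_ofReal

lemma integral_massMeasure (hφ : AEMeasurable φ (volume.restrict (Ioi 0)))
    (h0 : ∀ᵐ x ∂volume.restrict (Ioi 0), 0 ≤ φ x) (g : ℝ → ℝ) :
    ∫ x, g x ∂massMeasure φ = ∫ x in Ioi 0, x * φ x * g x := by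
  rw [massMeasure, integral_withDensity_eq_integral_toReal_smul₀ (aemeasurable_mul_Ioi hφ)
    (Eventually.of_forall fun _ => ENNReal.ofReal_lt_top)]
  refine integral_congr_ae ?_
  filter_upwards [ae_mul_nonneg_Ioi h0] with x hx
  rw [ENNReal.toReal_ofReal hx, smul_eq_mul]

lemma lintegral_massMeasure (hφ : AEMeasurable φ (volume.restrict (Ioi 0))) (g : ℝ → ENNReal) :
    ∫⁻ x, g x ∂massMeasure φ = ∫⁻ x in Ioi 0, ENNReal.ofReal (x * φ x) * g x :=
  lintegral_withDensity_eq_lintegral_mul_non_measurable₀ _ (aemeasurable_mul_Ioi hφ)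
    (Eventually.of_forall fun _ => ENNReal.ofReal_lt_top) g

lemma integral_integral_fluxRegion_massMeasure (hφ : AEMeasurable φ (volume.restrict (Ioi 0)))
    (h0 : ∀ᵐ x ∂volume.restrict (Ioi 0), 0 ≤ φ x) (K : ℝ → ℝ → ℝ) (x : ℝ) :
    ∫ y, ∫ z, (fluxRegion x).indicator (fun w => K w.1 w.2 / w.2) (y, z)
        ∂massMeasure φ ∂massMeasure φ =
      ∫ y in Ioo 0 x, ∫ z in Ioi (x - y), y * K y z * φ y * φ z := by
  rw [← Ioi_inter_Iio, ← setIntegral_indicator measurableSet_Iio, integral_massMeasure hφ h0]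
  refine setIntegral_congr_fun measurableSet_Ioi fun y _ => ?_
  rw [integral_massMeasure hφ h0, ← integral_const_mul]
  by_cases hyx : y ∈ Iio x
  · rw [indicator_of_mem hyx,
      ← inter_eq_self_of_subset_right (Ioi_subset_Ioi (sub_nonneg.2 (mem_Iio.1 hyx).le)),
      ← setIntegral_indicator measurableSet_Ioi]
    refine setIntegral_congr_fun measurableSet_Ioi fun z (hz : 0 < z) => ?_
    by_cases hxz : z ∈ Ioi (x - y)
    · rw [indicator_of_mem (show (y, z) ∈ fluxRegion x from ⟨hyx, sub_lt_iff_lt_add'.1 hxz⟩),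
        indicator_of_mem hxz]
      field_simp
    · rw [indicator_of_notMem (fun h : (y, z) ∈ fluxRegion x => hxz (sub_lt_iff_lt_add'.2 h.2)),
        indicator_of_notMem hxz, mul_zero, mul_zero]
  · rw [indicator_of_notMem hyx]
    simp only [indicator_of_notMem (fun h : (y, _) ∈ fluxRegion x => hyx h.1), mul_zero,
      integral_zero]

end MassMeasure

lemma toReal_lintegral_prod {X Y : Type*} [MeasurableSpace X] [MeasurableSpace Y]
    {μ : Measure X} {ν : Measure Y} [SFinite μ] [SFinite ν] {k : X × Y → ℝ}
    (hk : AEMeasurable k (μ.prod ν)) (h0 : ∀ᵐ w ∂μ.prod ν, 0 ≤ k w)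
    (hfin : ∀ᵐ x ∂μ, ∫⁻ y, ENNReal.ofReal (k (x, y)) ∂ν < ⊤) :
    (∫⁻ w, ENNReal.ofReal (k w) ∂μ.prod ν).toReal = ∫ x, ∫ y, k (x, y) ∂ν ∂μ := by
  rw [lintegral_prod _ hk.ennreal_ofReal,
    ← integral_toReal hk.ennreal_ofReal.lintegral_prod_right' hfin]
  refine integral_congr_ae ?_
  filter_upwards [Measure.ae_ae_of_ae_prod h0, hk.aestronglyMeasurable.prodMk_left] with x hx hkx
  rw [integral_eq_lintegral_of_nonneg_ae hx hkx]

/-! ### Finiteness of the flux -/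

section Finiteness

variable {α ε : ℝ} {K : ℝ → ℝ → ℝ} {ρ : Measure ℝ} {r x : ℝ}

lemma IsPerturbedKernel.le_mul_mul (hK : IsPerturbedKernel α ε K) (hα : α ∈ Icc (0 : ℝ) 1)
    {y z : ℝ} (hr : 0 < r) (hy : r ≤ y) (hz : r ≤ z) :
    K y z ≤ (2 + 4 * ε) / r ^ 2 * (y * z) := by
  have hy0 := hr.trans_le hy
  have hz0 := hr.trans_le hz
  have hratio : ∀ {u v : ℝ}, r ≤ u → r ≤ v → (u / v) ^ α ≤ 2 * (u * v / r ^ 2) := by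
    intro u v hu hv
    have hv0 := hr.trans_le hv
    have hu0 := hr.trans_le hu
    have h1 : 1 ≤ u * v / r ^ 2 := by
      rw [one_le_div (by positivity)]; nlinarith
    have h2 : u / v ≤ u * v / r ^ 2 := by
      rw [div_le_div_iff₀ hv0 (by positivity), mul_assoc]
      exact mul_le_mul_of_nonneg_left (by nlinarith) hu0.le
    linarith [rpow_le_one_add hα (div_nonneg hu0.le hv0.le)]
  have h1 : 1 ≤ y * z / r ^ 2 := by
    rw [one_le_div (by positivity)]; nlinarith
  calc K y z ≤ 2 + ε * ((y / z) ^ α + (z / y) ^ α) := hK.le_two_add y hy0 z hz0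
    _ ≤ 2 * (y * z / r ^ 2) + ε * (2 * (y * z / r ^ 2) + 2 * (z * y / r ^ 2)) :=
        add_le_add (by linarith)
          (mul_le_mul_of_nonneg_left (add_le_add (hratio hy hz) (hratio hz hy)) hK.eps_nonneg)
    _ = (2 + 4 * ε) / r ^ 2 * (y * z) := by ring

lemma IsPerturbedKernel.div_le_mul (hK : IsPerturbedKernel α ε K) (hα : α ∈ Icc (0 : ℝ) 1)
    {y z : ℝ} (hr : 0 < r) (hy : r ≤ y) (hz : r ≤ z) :
    K y z / z ≤ (2 + 4 * ε) / r ^ 2 * y := by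
  rw [div_le_iff₀ (hr.trans_le hz), mul_assoc]
  exact hK.le_mul_mul hα hr hy hz

lemma IsPerturbedKernel.lintegral_fluxRegion_section_lt_top [IsFiniteMeasure ρ]
    (hK : IsPerturbedKernel α ε K) (hα : α ∈ Icc (0 : ℝ) 1) {y : ℝ} (hy : 0 < y) :
    ∫⁻ z, ENNReal.ofReal ((fluxRegion x).indicator (fun w => K w.1 w.2 / w.2) (y, z)) ∂ρ < ⊤ := by
  have hbdd : ∀ z, ENNReal.ofReal ((fluxRegion x).indicator (fun w => K w.1 w.2 / w.2) (y, z)) ≤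
      ENNReal.ofReal ((2 + 4 * ε) / min y (x - y) ^ 2 * y) := by
    intro z
    by_cases h : (y, z) ∈ fluxRegion x
    · have hyx : 0 < x - y := sub_pos.2 h.1
      rw [indicator_of_mem h]
      exact ENNReal.ofReal_le_ofReal (hK.div_le_mul hα (lt_min hy hyx) (min_le_left _ _)
        ((min_le_right _ _).trans (sub_le_iff_le_add'.2 h.2.le)))
    · rw [indicator_of_notMem h, ENNReal.ofReal_zero]
      exact zero_le
  exact (lintegral_mono hbdd).trans_lt
    (by rw [lintegral_const]; exact ENNReal.mul_lt_top ENNReal.ofReal_lt_top (measure_lt_top _ _))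

lemma IsPerturbedKernel.setLIntegral_prod_Ici_lt_top [IsFiniteMeasure ρ]
    (hK : IsPerturbedKernel α ε K) (hα : α ∈ Icc (0 : ℝ) 1) (hx : 0 < x) (hxr : x ≤ r) :
    ∫⁻ w in Ico x r ×ˢ Ici r, ENNReal.ofReal (K w.1 w.2 / w.2) ∂ρ.prod ρ < ⊤ := by
  have hε := hK.eps_nonneg
  refine (setLIntegral_mono' (measurableSet_Ico.prod measurableSet_Ici)
    (g := fun _ => ENNReal.ofReal ((2 + 4 * ε) / x ^ 2 * r)) fun w hw => ?_).trans_lt ?_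
  · exact ENNReal.ofReal_le_ofReal ((hK.div_le_mul hα hx hw.1.1 (hxr.trans hw.2)).trans
      (mul_le_mul_of_nonneg_left hw.1.2.le (by positivity)))
  · rw [setLIntegral_const]
    exact ENNReal.mul_lt_top ENNReal.ofReal_lt_top (measure_lt_top _ _)

lemma IsPerturbedKernel.setLIntegral_Iio_prod_Ici_lt_top [IsFiniteMeasure ρ]
    (hK : IsPerturbedKernel α ε K) (hα : α ∈ Icc (0 : ℝ) 1) (hρ : ∀ᵐ x ∂ρ, 0 < x) (hx : 0 < x)
    (hxr : x < r) (hflux : massFlux K ρ x < ⊤) :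
    ∫⁻ w in Iio r ×ˢ Ici r, ENNReal.ofReal (K w.1 w.2 / w.2) ∂ρ.prod ρ < ⊤ := by
  have hsub : (Iio r ×ˢ Ici r : Set (ℝ × ℝ)) ≤ᵐ[ρ.prod ρ]
      (fluxRegion x ∪ Ico x r ×ˢ Ici r : Set (ℝ × ℝ)) := by
    filter_upwards [ae_prod_pos hρ] with w hpos hw
    rcases lt_or_ge w.1 x with h | h
    · exact Or.inl ⟨h, by linarith [hpos.1, mem_Ici.1 hw.2]⟩
    · exact Or.inr ⟨⟨h, hw.1⟩, hw.2⟩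
  exact (lintegral_mono_set' hsub).trans_lt <| (lintegral_union_le _ _ _).trans_lt <|
    ENNReal.add_lt_top.2 ⟨hflux, hK.setLIntegral_prod_Ici_lt_top hα hx hxr.le⟩

/-- Only pairs with one entry above `r` reach `(2r, b)`; the integrals with exactly one are those of
`setLIntegral_Iio_prod_Ici_lt_top`, up to swapping the entries. -/
lemma IsPerturbedKernel.ofReal_div_mul_le (hK : IsPerturbedKernel α ε K) (hα : α ∈ Icc (0 : ℝ) 1)
    (hr : 0 < r) {b y z : ℝ} (hy : 0 < y) (hz : 0 < z) :
    ENNReal.ofReal (K y z / z) * volume.restrict (Ioo (2 * r) b) (Ioo y (y + z)) ≤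
      ENNReal.ofReal b * ((Iio r ×ˢ Ici r).indicator (fun w => ENNReal.ofReal (K w.1 w.2 / w.2))
        (y, z) + (Iio r ×ˢ Ici r).indicator (fun w => ENNReal.ofReal (K w.1 w.2 / w.2)) (z, y) +
        ENNReal.ofReal ((2 + 4 * ε) / r ^ 2 * b)) := by
  have hε := hK.eps_nonneg
  have hK0 : 0 ≤ K y z := by linarith [hK.two_le y hy z hz]
  rw [Measure.restrict_apply measurableSet_Ioo, Ioo_inter_Ioo, Real.volume_Ioo]
  rcases lt_or_ge y b with hyb | hyb
  swap
  · rw [ENNReal.ofReal_of_nonpos (p := min _ _ - _)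
      (by linarith [min_le_right (y + z) b, le_max_left y (2 * r)]), mul_zero]
    exact zero_le
  have hlen : ENNReal.ofReal (min (y + z) b - max y (2 * r)) ≤ ENNReal.ofReal b :=
    ENNReal.ofReal_le_ofReal (by linarith [min_le_right (y + z) b, le_max_right y (2 * r)])
  rcases lt_or_ge y r with hyr | hyr <;> rcases lt_or_ge z r with hzr | hzr
  · rw [ENNReal.ofReal_of_nonpos (p := min _ _ - _)
      (by linarith [min_le_left (y + z) b, le_max_right y (2 * r)]), mul_zero]
    exact zero_le
  · rw [indicator_of_mem (show (y, z) ∈ Iio r ×ˢ Ici r from ⟨hyr, hzr⟩), add_assoc, mul_comm]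
    exact mul_le_mul' hlen le_self_add
  · rw [indicator_of_mem (show (z, y) ∈ Iio r ×ˢ Ici r from ⟨hzr, hyr⟩)]
    calc ENNReal.ofReal (K y z / z) * ENNReal.ofReal (min (y + z) b - max y (2 * r))
        ≤ ENNReal.ofReal (K y z / z) * ENNReal.ofReal z := by
          gcongr
          linarith [min_le_left (y + z) b, le_max_left y (2 * r)]
      _ = ENNReal.ofReal y * ENNReal.ofReal (K z y / y) := by
          rw [← ENNReal.ofReal_mul (by positivity), ← ENNReal.ofReal_mul hy.le,
            div_mul_cancel₀ _ hz.ne', mul_div_cancel₀ _ hy.ne', hK.symm y hy z hz]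
      _ ≤ _ := by
          refine mul_le_mul' (ENNReal.ofReal_le_ofReal hyb.le) ?_
          exact le_add_self.trans le_self_add
  · rw [mul_comm]
    refine mul_le_mul' hlen (le_trans (ENNReal.ofReal_le_ofReal ?_) le_add_self)
    exact (hK.div_le_mul hα hr hyr hzr).trans (mul_le_mul_of_nonneg_left hyb.le (by positivity))

lemma IsPerturbedKernel.ae_massFlux_lt_top_of_setLIntegral [IsFiniteMeasure ρ]
    (hK : IsPerturbedKernel α ε K) (hα : α ∈ Icc (0 : ℝ) 1) (hρ : ρ ≪ volume.restrict (Ioi 0))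
    (hr : 0 < r)
    (hfin : ∫⁻ w in Iio r ×ˢ Ici r, ENNReal.ofReal (K w.1 w.2 / w.2) ∂ρ.prod ρ < ⊤) (b : ℝ) :
    ∀ᵐ x ∂volume.restrict (Ioo (2 * r) b), massFlux K ρ x < ⊤ := by
  have hpos := ae_pos_of_absolutelyContinuous hρ
  have hk := hK.aemeasurable_ofReal_div hρ
  have hS : MeasurableSet (Iio r ×ˢ Ici r : Set (ℝ × ℝ)) := measurableSet_Iio.prod measurableSet_Ici
  set k := (Iio r ×ˢ Ici r).indicator fun w : ℝ × ℝ => ENNReal.ofReal (K w.1 w.2 / w.2)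
  have hkm : AEMeasurable k (ρ.prod ρ) := hk.indicator hS
  have htonelli : ∫⁻ x in Ioo (2 * r) b, massFlux K ρ x = ∫⁻ w, ENNReal.ofReal (K w.1 w.2 / w.2) *
      volume.restrict (Ioo (2 * r) b) (Ioo w.1 (w.1 + w.2)) ∂ρ.prod ρ := by
    simpa [massFlux] using lintegral_mul_setLIntegral_fluxRegion
      (volume.restrict (Ioo (2 * r) b)) (h := fun _ => 1) measurable_const hk
  refine ae_lt_top (hK.measurable_massFlux hρ) (ne_top_of_le_ne_top ?_ (htonelli.trans_le
    (lintegral_mono_ae ((ae_prod_pos hpos).mono fun w hw =>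
      hK.ofReal_div_mul_le hα hr hw.1 hw.2))))
  have hswap : ∫⁻ w, k (w.2, w.1) ∂ρ.prod ρ = ∫⁻ w, k w ∂ρ.prod ρ := lintegral_prod_swap k
  rw [lintegral_const_mul' _ _ ENNReal.ofReal_ne_top, lintegral_add_right _ measurable_const,
    lintegral_add_left' hkm, hswap, lintegral_indicator hS, lintegral_const]
  finiteness

end Finiteness

namespace IsProfile

variable {α ε : ℝ} {K : ℝ → ℝ → ℝ} {φ : ℝ → ℝ}

lemma aemeasurable (h : IsProfile K φ) : AEMeasurable φ (volume.restrict (Ioi 0)) :=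
  h.1.aestronglyMeasurable.aemeasurable

lemma isFiniteMeasure_massMeasure (h : IsProfile K φ) : IsFiniteMeasure (massMeasure φ) :=
  isFiniteMeasure_withDensity_ofReal h.2.2.1.2

lemma sq_mul_eq_toReal_massFlux (h : IsProfile K φ) (hK : IsPerturbedKernel α ε K)
    (hα : α ∈ Icc (0 : ℝ) 1) :
    ∀ᵐ x ∂volume.restrict (Ioi 0), x ^ 2 * φ x = (massFlux K (massMeasure φ) x).toReal := by
  have := h.isFiniteMeasure_massMeasure
  have hac := massMeasure_absolutelyContinuous φ
  have hpos := ae_pos_of_absolutelyContinuous hac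
  filter_upwards [h.2.2.2] with x hx
  have hkm : AEMeasurable ((fluxRegion x).indicator fun w => K w.1 w.2 / w.2)
      ((massMeasure φ).prod (massMeasure φ)) :=
    ((hK.aemeasurable_prod hac).div measurable_snd.aemeasurable).indicator
      (measurableSet_fluxRegion x)
  have hk0 : ∀ᵐ w ∂(massMeasure φ).prod (massMeasure φ),
      0 ≤ (fluxRegion x).indicator (fun w => K w.1 w.2 / w.2) w := by
    filter_upwards [ae_prod_pos hpos] with w hw
    exact indicator_apply_nonneg fun _ =>
      div_nonneg (zero_le_two.trans (hK.two_le _ hw.1 _ hw.2)) hw.2.le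
  rw [hx, ← integral_integral_fluxRegion_massMeasure h.aemeasurable h.2.1, massFlux,
    ← lintegral_indicator (measurableSet_fluxRegion x), ← toReal_lintegral_prod hkm hk0
      (hpos.mono fun y hy => hK.lintegral_fluxRegion_section_lt_top hα hy)]
  refine congrArg ENNReal.toReal (lintegral_congr fun w => ?_)
  exact (congrFun (indicator_comp_of_zero ENNReal.ofReal_zero) w).symm

lemma massMeasure_Iio_eq_zero (h : IsProfile K φ) (hK : IsPerturbedKernel α ε K)
    (hα : α ∈ Icc (0 : ℝ) 1) {r : ℝ} (htop : ∀ x ∈ Ioo 0 r, massFlux K (massMeasure φ) x = ⊤) :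
    massMeasure φ (Iio r) = 0 := by
  rw [massMeasure, withDensity_apply _ measurableSet_Iio]
  refine lintegral_eq_zero_of_ae_eq_zero ?_
  filter_upwards [ae_restrict_of_ae (h.sq_mul_eq_toReal_massFlux hK hα),
    ae_restrict_of_ae (ae_restrict_mem measurableSet_Ioi), ae_restrict_mem measurableSet_Iio]
    with x hflux hx0 hxr
  rw [htop x ⟨hx0, hxr⟩, ENNReal.toReal_top] at hflux
  rw [(mul_eq_zero.1 hflux).resolve_left (pow_pos hx0 2).ne', mul_zero, ENNReal.ofReal_zero,
    Pi.zero_apply]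

lemma setLIntegral_Iio_prod_Ici_lt_top (h : IsProfile K φ) (hK : IsPerturbedKernel α ε K)
    (hα : α ∈ Icc (0 : ℝ) 1) (r : ℝ) :
    ∫⁻ w in Iio r ×ˢ Ici r, ENNReal.ofReal (K w.1 w.2 / w.2)
      ∂(massMeasure φ).prod (massMeasure φ) < ⊤ := by
  have := h.isFiniteMeasure_massMeasure
  by_cases hfin : ∃ x ∈ Ioo 0 r, massFlux K (massMeasure φ) x < ⊤
  · obtain ⟨x, hx, hlt⟩ := hfin
    exact hK.setLIntegral_Iio_prod_Ici_lt_top hα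
      (ae_pos_of_absolutelyContinuous (massMeasure_absolutelyContinuous φ)) hx.1 hx.2 hlt
  · push Not at hfin
    have hnull := h.massMeasure_Iio_eq_zero hK hα fun x hx => top_le_iff.1 (hfin x hx)
    rw [setLIntegral_measure_zero _ _ (by rw [Measure.prod_prod, hnull, zero_mul])]
    exact ENNReal.zero_lt_top

/-- An infinite flux is not excluded by the profile equation alone, in which the Bochner integral
then takes the value `0`. -/
lemma massFlux_lt_top (h : IsProfile K φ) (hK : IsPerturbedKernel α ε K)
    (hα : α ∈ Icc (0 : ℝ) 1) :
    ∀ᵐ x ∂volume.restrict (Ioi 0), massFlux K (massMeasure φ) x < ⊤ := by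
  have := h.isFiniteMeasure_massMeasure
  rw [ae_restrict_iff' measurableSet_Ioi]
  have hloc : ∀ n : ℕ, ∀ᵐ x, x ∈ Ioo (2 * (1 / ((n : ℝ) + 1))) n →
      massFlux K (massMeasure φ) x < ⊤ := fun n =>
    (ae_restrict_iff' measurableSet_Ioo).1 <| hK.ae_massFlux_lt_top_of_setLIntegral hα
      (massMeasure_absolutelyContinuous φ) (by positivity)
      (h.setLIntegral_Iio_prod_Ici_lt_top hK hα _) n
  filter_upwards [ae_all_iff.2 hloc] with x hx (hx0 : 0 < x)
  have hsmall : ∀ᶠ n : ℕ in atTop, 2 * (1 / ((n : ℝ) + 1)) < x := by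
    have hlim := (tendsto_one_div_add_atTop_nhds_zero_nat (𝕜 := ℝ)).const_mul 2
    rw [mul_zero] at hlim
    exact hlim.eventually_lt_const hx0
  obtain ⟨n, hn⟩ := (hsmall.and (tendsto_natCast_atTop_atTop.eventually_gt_atTop x)).exists
  exact hx n hn

lemma massFlux_eq (h : IsProfile K φ) (hK : IsPerturbedKernel α ε K) (hα : α ∈ Icc (0 : ℝ) 1) :
    ∀ᵐ x ∂volume.restrict (Ioi 0), massFlux K (massMeasure φ) x = ENNReal.ofReal (x ^ 2 * φ x) := by
  filter_upwards [h.sq_mul_eq_toReal_massFlux hK hα, h.massFlux_lt_top hK hα] with x hx hlt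
  rw [hx, ENNReal.ofReal_toReal hlt.ne]

lemma isMassProfile (h : IsProfile K φ) (hK : IsPerturbedKernel α ε K) (hα : α ∈ Icc (0 : ℝ) 1) :
    IsMassProfile K (massMeasure φ) := by
  have := h.isFiniteMeasure_massMeasure
  have hac := massMeasure_absolutelyContinuous φ
  refine ⟨hac, ?_⟩
  have hind : massFlux K (massMeasure φ) = (Ioi 0).indicator (massFlux K (massMeasure φ)) := by
    refine (indicator_eq_self.2 fun x hx => ?_).symm
    by_contra hx0
    refine hx (setLIntegral_measure_zero _ _ (measure_mono_null (fun w hw => ?_)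
      (ae_iff.1 (ae_prod_pos (ae_pos_of_absolutelyContinuous hac)))))
    exact fun hpos => hx0 (hpos.1.trans hw.1)
  rw [hind, withDensity_indicator measurableSet_Ioi, massMeasure,
    ← withDensity_mul₀ (aemeasurable_mul_Ioi h.aemeasurable)
      ENNReal.measurable_ofReal.aemeasurable]
  refine withDensity_congr_ae ?_
  filter_upwards [h.massFlux_eq hK hα, ae_restrict_mem measurableSet_Ioi] with x hx hx0
  rw [Pi.mul_apply, ← ENNReal.ofReal_mul' (le_of_lt hx0), ← massMeasure, hx]
  ring_nf

lemma integrableOn_and_integral_le_one (h : IsProfile K φ) (hn : IsNormalised φ)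
    (hK : IsPerturbedKernel α ε K) (hα : α ∈ Icc (0 : ℝ) 1) :
    IntegrableOn φ (Ioi 0) ∧ ∫ x in Ioi 0, φ x ≤ 1 := by
  have := isProbabilityMeasure_massMeasure h.2.1 hn
  have hle := (h.isMassProfile hK hα).lintegral_inv_le_one hK
  have heq : ∫⁻ x, ENNReal.ofReal x⁻¹ ∂massMeasure φ = ∫⁻ x in Ioi 0, ENNReal.ofReal (φ x) := by
    rw [lintegral_massMeasure h.aemeasurable]
    refine setLIntegral_congr_fun measurableSet_Ioi fun x (hx : 0 < x) => ?_
    rw [← ENNReal.ofReal_mul' (inv_pos.2 hx).le, mul_right_comm, mul_inv_cancel₀ hx.ne', one_mul]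
  rw [heq] at hle
  refine ⟨⟨h.aemeasurable.aestronglyMeasurable, ?_⟩, ?_⟩
  · rw [hasFiniteIntegral_iff_ofReal h.2.1]
    exact hle.trans_lt ENNReal.one_lt_top
  · rw [integral_eq_lintegral_of_nonneg_ae h.2.1 h.aemeasurable.aestronglyMeasurable]
    exact ENNReal.toReal_mono ENNReal.one_ne_top hle

end IsProfile

/-! ### Continuity theorem for Laplace transforms -/

lemma tendsto_of_forall_tendsto_integral_pow {ι : Type*} {l : Filter ι}
    {μ : ι → ProbabilityMeasure unitInterval} {ν : ProbabilityMeasure unitInterval}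
    (h : ∀ k : ℕ, Tendsto (fun i => ∫ u : unitInterval, (u : ℝ) ^ k ∂(μ i : Measure unitInterval))
      l (nhds (∫ u : unitInterval, (u : ℝ) ^ k ∂(ν : Measure unitInterval)))) :
    Tendsto μ l (nhds ν) := by
  let polynomials : StarSubalgebra ℝ (BoundedContinuousFunction unitInterval ℝ) :=
    { (polynomialFunctions unitInterval).comap
        (BoundedContinuousFunction.toContinuousMapₐ (α := unitInterval) ℝ) with
      star_mem' := id }
  refine ProbabilityMeasure.tendsto_of_tight_of_separatesPoints ℝ
    IsTightMeasureSet.of_compactSpace (A := polynomials) ?_ ?_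
  · exact fun u v huv => ⟨_, ⟨_, ⟨BoundedContinuousFunction.mkOfCompact
      (Polynomial.X.toContinuousMapOn unitInterval), ⟨Polynomial.X, trivial, rfl⟩, rfl⟩, rfl⟩,
      by simpa [Subtype.ext_iff] using huv⟩
  · rintro g ⟨q, -, hq⟩
    have hg : ∀ u : unitInterval, g u = ∑ k ∈ q.support, q.coeff k * (u : ℝ) ^ k := fun u =>
      (DFunLike.congr_fun hq u).symm.trans Polynomial.eval_eq_sum
    have hint : ∀ (m : ProbabilityMeasure unitInterval) (k : ℕ),
        Integrable (fun u : unitInterval => q.coeff k * (u : ℝ) ^ k) (m : Measure unitInterval) :=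
      fun m k => (BoundedContinuousFunction.mkOfCompact
        ⟨fun u : unitInterval => q.coeff k * (u : ℝ) ^ k, by fun_prop⟩).integrable _
    simp only [hg, integral_finsetSum _ fun k _ => hint _ k, integral_const_mul]
    exact tendsto_finsetSum _ fun k _ => (h k).const_mul _

section LaplaceContinuity

/-- The change of variables `x ↦ e^{-x}`, cut off at `1` for `x < 0`, which turns Laplace transforms
at the integers into moments. -/
noncomputable def expNegUnit (x : ℝ) : unitInterval := projIcc 0 1 zero_le_one (exp (-x))

lemma continuous_expNegUnit : Continuous expNegUnit :=
  continuous_projIcc.comp (by fun_prop)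

lemma coe_expNegUnit {x : ℝ} (hx : 0 ≤ x) : (expNegUnit x : ℝ) = exp (-x) := by
  rw [expNegUnit, projIcc_of_mem _ ⟨(exp_pos _).le, exp_le_one_iff.2 (neg_nonpos.2 hx)⟩]

lemma integral_pow_map_expNegUnit {μ : Measure ℝ} (hμ : ∀ᵐ x ∂μ, 0 ≤ x) (k : ℕ) :
    ∫ u : unitInterval, (u : ℝ) ^ k ∂μ.map expNegUnit = laplaceTransform μ k := by
  rw [integral_map continuous_expNegUnit.aemeasurable
    (by fun_prop : Continuous fun u : unitInterval => (u : ℝ) ^ k).aestronglyMeasurable]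
  refine integral_congr_ae (hμ.mono fun x hx => ?_)
  dsimp only
  rw [coe_expNegUnit hx, ← exp_nat_mul, mul_neg]

lemma exists_isOpen_forall_measure_eq_map_expNegUnit {G : Set ℝ} (hG : IsOpen G) :
    ∃ U : Set unitInterval, IsOpen U ∧
      ∀ μ : Measure ℝ, (∀ᵐ x ∂μ, 0 ≤ x) → μ G = μ.map expNegUnit U := by
  have hlog : ContinuousOn (fun u : unitInterval => -log u) {0}ᶜ := fun u hu =>
    (continuous_subtype_val.continuousAt.log (fun h => hu (Subtype.ext h))).neg.continuousWithinAt
  refine ⟨_, hlog.isOpen_inter_preimage isOpen_compl_singleton hG, fun μ hμ => ?_⟩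
  rw [Measure.map_apply continuous_expNegUnit.measurable
    (hlog.isOpen_inter_preimage isOpen_compl_singleton hG).measurableSet]
  refine measure_congr (hμ.mono fun x hx => propext ?_)
  have hne : expNegUnit x ≠ 0 := fun h => (exp_pos (-x)).ne' (by
    rw [← coe_expNegUnit hx, h]; rfl)
  change x ∈ G ↔ expNegUnit x ≠ 0 ∧ -log (expNegUnit x) ∈ G
  rw [coe_expNegUnit hx, log_exp, neg_neg]
  exact (and_iff_right hne).symm

theorem tendsto_of_forall_tendsto_laplaceTransform {ι : Type*} {l : Filter ι}
    [l.IsCountablyGenerated] {μ : ι → ProbabilityMeasure ℝ} {ν : ProbabilityMeasure ℝ}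
    (hμ : ∀ i, ∀ᵐ x ∂(μ i : Measure ℝ), 0 ≤ x) (hν : ∀ᵐ x ∂(ν : Measure ℝ), 0 ≤ x)
    (h : ∀ k : ℕ, Tendsto (fun i => laplaceTransform (μ i) k) l (nhds (laplaceTransform ν k))) :
    Tendsto μ l (nhds ν) := by
  have hmap : Tendsto (fun i => (μ i).map continuous_expNegUnit.aemeasurable) l
      (nhds (ν.map continuous_expNegUnit.aemeasurable)) := by
    refine tendsto_of_forall_tendsto_integral_pow fun k => ?_
    simpa only [ProbabilityMeasure.toMeasure_map, integral_pow_map_expNegUnit (hμ _),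
      integral_pow_map_expNegUnit hν] using h k
  refine tendsto_of_forall_isOpen_le_liminf' fun G hG => ?_
  obtain ⟨U, hU, hGU⟩ := exists_isOpen_forall_measure_eq_map_expNegUnit hG
  simpa only [hGU _ hν, hGU _ (hμ _), ProbabilityMeasure.toMeasure_map] using
    ProbabilityMeasure.le_liminf_measure_open_of_tendsto hmap hU

end LaplaceContinuity

/-! ### Lower semicontinuity of the flux -/

lemma lintegral_le_liminf_lintegral_of_lowerSemicontinuous {Ω : Type*} [TopologicalSpace Ω]
    [MeasurableSpace Ω] [OpensMeasurableSpace Ω] [HasOuterApproxClosed Ω]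
    {μ : ℕ → ProbabilityMeasure Ω} {ν : ProbabilityMeasure Ω} (h : Tendsto μ atTop (nhds ν))
    {f : Ω → ℝ} (hf : LowerSemicontinuous f) (h0 : 0 ≤ f) :
    ∫⁻ w, ENNReal.ofReal (f w) ∂(ν : Measure Ω) ≤
      liminf (fun n => ∫⁻ w, ENNReal.ofReal (f w) ∂(μ n : Measure Ω)) atTop := by
  have layercake : ∀ m : Measure Ω,
      ∫⁻ w, ENNReal.ofReal (f w) ∂m = ∫⁻ t in Ioi 0, m {w | t < f w} := fun m =>
    lintegral_eq_lintegral_meas_lt m (Eventually.of_forall h0) hf.measurable.aemeasurable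
  simp only [layercake]
  calc ∫⁻ t in Ioi 0, (ν : Measure Ω) {w | t < f w}
      ≤ ∫⁻ t in Ioi 0, liminf (fun n => (μ n : Measure Ω) {w | t < f w}) atTop :=
        lintegral_mono fun t =>
          ProbabilityMeasure.le_liminf_measure_open_of_tendsto h (hf.isOpen_preimage t)
    _ ≤ liminf (fun n => ∫⁻ t in Ioi 0, (μ n : Measure Ω) {w | t < f w}) atTop :=
        lintegral_liminf_le fun n => Antitone.measurable fun s t hst =>
          measure_mono fun w (hw : t < f w) => hst.trans_lt hw

lemma lowerSemicontinuous_indicator_of_continuousOn {Ω : Type*} [TopologicalSpace Ω] {S : Set Ω}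
    (hS : IsOpen S) {f : Ω → ℝ} (hf : ContinuousOn f S) (h0 : ∀ w ∈ S, 0 ≤ f w) :
    LowerSemicontinuous (S.indicator f) := by
  intro w t ht
  by_cases hw : w ∈ S
  · rw [indicator_of_mem hw] at ht
    filter_upwards [hS.mem_nhds hw, (hf.continuousAt (hS.mem_nhds hw)).eventually_const_lt ht]
      with v hv hlt
    rwa [indicator_of_mem hv]
  · rw [indicator_of_notMem hw] at ht
    exact Eventually.of_forall fun v => ht.trans_le (indicator_apply_nonneg (h0 v))

lemma lowerSemicontinuous_indicator_fluxRegion {c : ℝ} (hc : 0 ≤ c) (x : ℝ) :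
    LowerSemicontinuous ((fluxRegion x).indicator fun w => c / w.2) := by
  have hpos : ∀ w ∈ fluxRegion x, 0 < w.2 := fun w hw => by linarith [hw.1, hw.2]
  exact lowerSemicontinuous_indicator_of_continuousOn (isOpen_fluxRegion x)
    (continuousOn_const.div continuousOn_snd fun w hw => (hpos w hw).ne')
    fun w hw => div_nonneg hc (hpos w hw).le

lemma massFlux_const_le_liminf {μ : ℕ → ProbabilityMeasure ℝ} {ν : ProbabilityMeasure ℝ}
    (h : Tendsto μ atTop (nhds ν)) {c : ℝ} (hc : 0 ≤ c) (x : ℝ) :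
    massFlux (fun _ _ => c) ν x ≤ liminf (fun n => massFlux (fun _ _ => c) (μ n) x) atTop := by
  have hflux : ∀ ρ : ProbabilityMeasure ℝ, massFlux (fun _ _ => c) ρ x =
      ∫⁻ w, ENNReal.ofReal ((fluxRegion x).indicator (fun w => c / w.2) w)
        ∂(ρ.prod ρ : ProbabilityMeasure (ℝ × ℝ)) := fun ρ => by
    rw [massFlux, ← lintegral_indicator (measurableSet_fluxRegion x)]
    exact lintegral_congr fun w =>
      congrFun (indicator_comp_of_zero (g := ENNReal.ofReal) ENNReal.ofReal_zero) w
  have hprod : Tendsto (fun n => (μ n).prod (μ n)) atTop (nhds (ν.prod ν)) :=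
    (ProbabilityMeasure.continuous_prod.tendsto (ν, ν)).comp (h.prodMk_nhds h)
  simp only [hflux]
  refine lintegral_le_liminf_lintegral_of_lowerSemicontinuous hprod
    (lowerSemicontinuous_indicator_fluxRegion hc x) ?_
  exact indicator_nonneg fun w hw => div_nonneg hc (by linarith [hw.1, hw.2])

lemma massFlux_two_le {α ε : ℝ} {K : ℝ → ℝ → ℝ} (hK : IsPerturbedKernel α ε K) {ρ : Measure ℝ}
    [SFinite ρ] (hρ : ∀ᵐ x ∂ρ, 0 < x) (x : ℝ) :
    massFlux (fun _ _ => 2) ρ x ≤ massFlux K ρ x := by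
  refine lintegral_mono_ae (ae_restrict_of_ae ((ae_prod_pos hρ).mono fun w hw => ?_))
  exact ENNReal.ofReal_le_ofReal (div_le_div_of_nonneg_right (hK.two_le _ hw.1 _ hw.2) hw.2.le)

/-! ### Convergence to `e^{-x}` -/

lemma isPerturbedKernel_two : IsPerturbedKernel 0 0 fun _ _ => 2 where
  aemeasurable := aemeasurable_const
  symm _ _ _ _ := rfl
  two_le _ _ _ _ := le_rfl
  le_two_add _ _ _ _ := by rw [zero_mul, add_zero]

lemma integrableOn_mul_exp_neg : IntegrableOn (fun x : ℝ => x * exp (-x)) (Ioi 0) := by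
  simpa using integrableOn_rpow_mul_exp_neg_rpow (p := 1) (s := 1) (by norm_num) zero_lt_one

lemma isNormalised_exp_neg : IsNormalised fun x => exp (-x) := by
  have h := integral_rpow_mul_exp_neg_mul_Ioi (a := 2) (r := 1) two_pos one_pos
  norm_num at h
  exact h

lemma isProfile_two_exp_neg : IsProfile (fun _ _ => 2) fun x => exp (-x) := by
  refine ⟨(integrableOn_exp_neg_Ioi 0).locallyIntegrableOn,
    Eventually.of_forall fun x => (exp_pos _).le, integrableOn_mul_exp_neg, ?_⟩
  filter_upwards [ae_restrict_mem measurableSet_Ioi] with x hx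
  have hinner : ∀ y, ∫ z in Ioi (x - y), y * 2 * exp (-y) * exp (-z) = 2 * exp (-x) * y :=
    fun y => by
      rw [integral_const_mul, integral_exp_neg_Ioi, mul_assoc, ← exp_add]
      ring_nf
  simp only [hinner]
  rw [integral_const_mul, ← integral_Ioc_eq_integral_Ioo,
    ← intervalIntegral.integral_of_le (le_of_lt hx), integral_id]
  ring

/-- Scheffé's argument: by the bound on the masses `∫ |fₙ - g|` is at most twice the deficit
`∫ (g - fₙ)⁺`, which tends to zero because `g` dominates it. -/
lemma tendsto_integral_abs_sub_of_le_liminf {Ω : Type*} [MeasurableSpace Ω] {μ : Measure Ω}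
    {f : ℕ → Ω → ℝ} {g : Ω → ℝ} (hf : ∀ n, Integrable (f n) μ) (hg : Integrable g μ)
    (hf0 : ∀ n, ∀ᵐ x ∂μ, 0 ≤ f n x) (hle : ∀ n, ∫ x, f n x ∂μ ≤ ∫ x, g x ∂μ)
    (hliminf : ∀ᵐ x ∂μ, ∀ a < g x, ∀ᶠ n in atTop, a < f n x) :
    Tendsto (fun n => ∫ x, |f n x - g x| ∂μ) atTop (nhds 0) := by
  have hint : ∀ n, Integrable (fun x => max (g x - f n x) 0) μ := fun n => (hg.sub (hf n)).pos_part
  have hdeficit : Tendsto (fun n => ∫ x, max (g x - f n x) 0 ∂μ) atTop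
      (nhds (∫ _, 0 ∂μ)) := by
    refine tendsto_integral_of_dominated_convergence (fun x => |g x|)
      (fun n => (hint n).aestronglyMeasurable) hg.abs (fun n => ?_) ?_
    · filter_upwards [hf0 n] with x hx
      rw [norm_of_nonneg (le_max_right _ _)]
      exact max_le (by linarith [le_abs_self (g x)]) (abs_nonneg _)
    · filter_upwards [hliminf] with x hx
      refine tendsto_order.2 ⟨fun a ha => Eventually.of_forall fun n =>
        ha.trans_le (le_max_right _ _), fun a ha => ?_⟩
      filter_upwards [hx (g x - a) (by linarith)] with n hn
      exact max_lt (by linarith) ha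
  have hbound : ∀ n, ∫ x, |f n x - g x| ∂μ ≤ 2 * ∫ x, max (g x - f n x) 0 ∂μ := fun n => by
    have habs : ∀ x, |f n x - g x| = f n x - g x + 2 * max (g x - f n x) 0 := fun x => by
      rcases le_total (f n x) (g x) with hx | hx
      · rw [abs_of_nonpos (by linarith), max_eq_left (by linarith)]; ring
      · rw [abs_of_nonneg (by linarith), max_eq_right (by linarith)]; ring
    simp only [habs]
    rw [integral_add (f := fun x => f n x - g x) ((hf n).sub hg) ((hint n).const_mul 2),
      integral_sub (hf n) hg, integral_const_mul]
    linarith [hle n]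
  exact squeeze_zero (fun n => integral_nonneg fun x => abs_nonneg _) hbound
    (by simpa only [integral_zero, mul_zero] using hdeficit.const_mul 2)

lemma laplaceTransform_massMeasure_exp_neg {p : ℝ} (hp : 0 ≤ p) :
    laplaceTransform (massMeasure fun x => exp (-x)) p = 1 / (1 + p) ^ 2 := by
  have := isProbabilityMeasure_massMeasure isProfile_two_exp_neg.2.1 isNormalised_exp_neg
  exact tendsto_nhds_unique tendsto_const_nhds <|
    tendsto_laplaceTransform (α := 0) ⟨le_rfl, zero_lt_one⟩ tendsto_const_nhds
      (fun _ => isPerturbedKernel_two) (fun _ => isProfile_two_exp_neg.isMassProfile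
        isPerturbedKernel_two ⟨le_rfl, zero_le_one⟩) hp

section Limit

variable {α : ℝ} {ε : ℕ → ℝ} {K : ℕ → ℝ → ℝ → ℝ} {φ : ℕ → ℝ → ℝ}

lemma tendsto_massMeasure_exp_neg (hα : α ∈ Ico (0 : ℝ) 1) (hε : Tendsto ε atTop (nhds 0))
    (hK : ∀ n, IsPerturbedKernel α (ε n) (K n)) (h : ∀ n, IsProfile (K n) (φ n))
    {ρ : ℕ → ProbabilityMeasure ℝ} (hρ : ∀ n, (ρ n : Measure ℝ) = massMeasure (φ n))
    {ν : ProbabilityMeasure ℝ} (hν : (ν : Measure ℝ) = massMeasure fun x => exp (-x)) :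
    Tendsto ρ atTop (nhds ν) := by
  have hnonneg : ∀ f : ℝ → ℝ, ∀ᵐ x ∂massMeasure f, 0 ≤ x := fun f =>
    (ae_pos_of_absolutelyContinuous (massMeasure_absolutelyContinuous f)).mono fun _ => le_of_lt
  refine tendsto_of_forall_tendsto_laplaceTransform (fun n => by rw [hρ]; exact hnonneg _)
    (by rw [hν]; exact hnonneg _) fun k => ?_
  rw [hν, laplaceTransform_massMeasure_exp_neg k.cast_nonneg]
  refine tendsto_laplaceTransform hα hε hK (fun n => ?_) k.cast_nonneg
  rw [hρ]
  exact (h n).isMassProfile (hK n) (Ico_subset_Icc_self hα)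

lemma eventually_lt_of_lt_exp_neg (hα : α ∈ Ico (0 : ℝ) 1) (hε : Tendsto ε atTop (nhds 0))
    (hK : ∀ n, IsPerturbedKernel α (ε n) (K n)) (h : ∀ n, IsProfile (K n) (φ n))
    (hn : ∀ n, IsNormalised (φ n)) :
    ∀ᵐ x ∂volume.restrict (Ioi 0), ∀ a < exp (-x), ∀ᶠ n in atTop, a < φ n x := by
  have hα' := Ico_subset_Icc_self hα
  let ρ : ℕ → ProbabilityMeasure ℝ := fun n =>
    ⟨massMeasure (φ n), isProbabilityMeasure_massMeasure (h n).2.1 (hn n)⟩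
  let ν : ProbabilityMeasure ℝ := ⟨massMeasure fun x => exp (-x),
    isProbabilityMeasure_massMeasure isProfile_two_exp_neg.2.1 isNormalised_exp_neg⟩
  have hweak : Tendsto ρ atTop (nhds ν) :=
    tendsto_massMeasure_exp_neg hα hε hK h (fun _ => rfl) rfl
  filter_upwards [ae_all_iff.2 fun n => (h n).massFlux_eq (hK n) hα',
    isProfile_two_exp_neg.massFlux_eq isPerturbedKernel_two ⟨le_rfl, zero_le_one⟩,
    ae_restrict_mem measurableSet_Ioi] with x hflux hfluxExp (hx : 0 < x) a ha
  have hliminf : ENNReal.ofReal (x ^ 2 * exp (-x)) ≤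
      liminf (fun n => massFlux (fun _ _ => 2) (ρ n) x) atTop :=
    hfluxExp.ge.trans (massFlux_const_le_liminf hweak zero_le_two x)
  have hlt : ENNReal.ofReal (x ^ 2 * a) < ENNReal.ofReal (x ^ 2 * exp (-x)) :=
    (ENNReal.ofReal_lt_ofReal_iff (by positivity)).2 (by gcongr)
  filter_upwards [eventually_lt_of_lt_liminf (hlt.trans_le hliminf)] with n hlt_n
  have := isProbabilityMeasure_massMeasure (h n).2.1 (hn n)
  have hflux_le : massFlux (fun _ _ => 2) (ρ n) x ≤ ENNReal.ofReal (x ^ 2 * φ n x) :=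
    (massFlux_two_le (hK n) (ae_pos_of_absolutelyContinuous
      (massMeasure_absolutelyContinuous (φ n))) x).trans_eq (hflux n)
  exact lt_of_mul_lt_mul_left (lt_of_not_ge fun hle =>
    (hlt_n.trans_le hflux_le).not_ge (ENNReal.ofReal_le_ofReal hle)) (sq_nonneg x)

theorem tendsto_integral_abs_sub_exp_neg (hα : α ∈ Ico (0 : ℝ) 1) (hε : Tendsto ε atTop (nhds 0))
    (hK : ∀ n, IsPerturbedKernel α (ε n) (K n)) (h : ∀ n, IsProfile (K n) (φ n))
    (hn : ∀ n, IsNormalised (φ n)) :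
    Tendsto (fun n => ∫ x in Ioi 0, |φ n x - exp (-x)|) atTop (nhds 0) := by
  have hφ n := (h n).integrableOn_and_integral_le_one (hn n) (hK n) (Ico_subset_Icc_self hα)
  refine tendsto_integral_abs_sub_of_le_liminf (fun n => (hφ n).1) (integrableOn_exp_neg_Ioi 0)
    (fun n => (h n).2.1) (fun n => ?_) (eventually_lt_of_lt_exp_neg hα hε hK h hn)
  rw [integral_exp_neg_Ioi_zero]
  exact (hφ n).2

end Limit

lemma GoodW.isPerturbedKernel {α ε : ℝ} {W : ℝ → ℝ → ℝ} (hW : GoodW α W) (hε : 0 ≤ ε) :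
    IsPerturbedKernel α ε (Kern ε W) where
  aemeasurable := by
    rw [Measure.prod_restrict]
    exact (continuousOn_const.add (continuousOn_const.mul hW.1)).aemeasurable
      (measurableSet_Ioi.prod measurableSet_Ioi)
  symm x hx y hy := by rw [Kern, Kern, hW.2.1 x y hx hy]
  two_le x hx y hy := le_add_of_nonneg_right (mul_nonneg hε (hW.2.2.2 x y hx hy).1)
  le_two_add x hx y hy := add_le_add_right (mul_le_mul_of_nonneg_left (hW.2.2.2 x y hx hy).2 hε) 2

theorem stmt7_general {α : ℝ} (hα : α ∈ Ico (0 : ℝ) 1) {δ : ℝ} (hδ : 0 < δ) :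
    ∃ εstar > (0 : ℝ), ∀ ε < εstar, ∀ K, IsPerturbedKernel α ε K →
      ∀ φ, IsProfile K φ → IsNormalised φ →
        IntegrableOn φ (Ioi 0) ∧ ∫ x in Ioi 0, |φ x - exp (-x)| < δ := by
  suffices hexists : ∃ εstar > (0 : ℝ), ∀ ε < εstar, ∀ K, IsPerturbedKernel α ε K →
      ∀ φ, IsProfile K φ → IsNormalised φ → ∫ x in Ioi 0, |φ x - exp (-x)| < δ by
    obtain ⟨εstar, hpos, hlt⟩ := hexists
    exact ⟨εstar, hpos, fun ε hε K hK φ h hn =>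
      ⟨(h.integrableOn_and_integral_le_one hn hK (Ico_subset_Icc_self hα)).1,
        hlt ε hε K hK φ h hn⟩⟩
  by_contra! hcon
  choose ε hε K hK φ h hn hge using fun n : ℕ => hcon (1 / ((n : ℝ) + 1)) Nat.one_div_pos_of_nat
  have hε0 : Tendsto ε atTop (nhds 0) := squeeze_zero (fun n => (hK n).eps_nonneg)
    (fun n => (hε n).le) tendsto_one_div_add_atTop_nhds_zero_nat
  obtain ⟨n, hlt⟩ :=
    ((tendsto_integral_abs_sub_exp_neg hα hε0 hK h hn).eventually_lt_const hδ).exists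
  exact (hge n).not_gt hlt

theorem stmt7 (α : ℝ) (hα : α ∈ Ioo (0:ℝ) 1) (W : ℝ → ℝ → ℝ) (hW : GoodW α W)
    (δ : ℝ) (hδ : 0 < δ) :
    ∃ εstar > (0:ℝ), ∀ ε : ℝ, 0 < ε → ε < εstar →
      ∀ φ : ℝ → ℝ, IsProfile (Kern ε W) φ → IsNormalised φ →
        ∫ x in Ioi (0:ℝ), |φ x - exp (-x)| < δ := by
  obtain ⟨εstar, hpos, hclose⟩ := stmt7_general (Ioo_subset_Ico_self hα) hδ
  exact ⟨εstar, hpos, fun ε hε hlt φ h hn =>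
    (hclose ε hlt _ (hW.isPerturbedKernel hε.le) φ h hn).2⟩
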